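/- arXiv:1212.0896 — 2 statements merged into one kernel-verified Lean document; each statement's English description precedes it below -/
import Mathlib

section
/- Suppose A is directed (e_j A e_i = 0 whenever j < i) and standardly stratified with respect to the index order (the left regular module A belongs to F(Δ)). Then a finitely generated left A-module M belongs to F(Δ) if and only if M has finite projective dimension; that is, F(Δ) coincides with the class of finitely generated left A-modules admitting a finite projective resolution. -/
/-!
Write `R_i = e_i A e_i`. It is a finite-dimensional `k`-algebra without nontrivial idempotents, so
`R_i = k + J_i` with `J_i` nilpotent. Directedness makes `Δ_i` concentrated at the vertex `i`: it
is `R_i`, with `a` acting as `e_i a e_i`. The argument compares both sides of the equivalence with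
the condition that every `e_i M` is free of finite rank over `R_i`.

* If every `e_i M` is free of finite rank, then `M` lies in `F(Δ)`. The subspaces
  `⊕_{j ≥ m} e_j M` are submodules by directedness, and the consecutive quotients `e_m M` are direct
  powers of `Δ_m` (`DirSys.upper_mem`).
* If `M` has finite projective dimension, every `e_i M` is free of finite rank. Since `A` lies in
  `F(Δ)`, each `e_i A` is projective over `R_i`, so the exact functor `M ↦ e_i M` preserves
  projectives. Over `R_i`, every injection of projective modules splits
  (`IsKLocal.exists_retraction`), so finite projective dimension implies projective
  (`corner_projective_of_projDim`), and finitely generated projectives are free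
  (`IsKLocal.exists_basis`).
* Each `Δ_i` has finite projective dimension, by downward induction on `i`: by the two previous
  points, the kernel of `Ae_i → Δ_i` is filtered by the `Δ_j` with `j > i`. Finite projective
  dimension passes to extensions by the horseshoe lemma (`projDim_ext`), hence to all of `F(Δ)`.
-/

set_option linter.unusedVariables false
set_option maxHeartbeats 1000000

noncomputable section

/-! ### The corner ring `eAe` of a ring `A` at an idempotent `e` -/

variable {A : Type} [Ring A]

/-- The corner ring `eAe`, realized as `{x : A | e * x = x ∧ x * e = x}`. -/
def Corner (e : A) (_he : e * e = e) : Type := {x : A // e * x = x ∧ x * e = x}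

namespace Corner

variable {e : A} {he : e * e = e}

instance : Zero (Corner e he) := ⟨⟨0, by simp, by simp⟩⟩
instance : Add (Corner e he) :=
  ⟨fun x y => ⟨x.1 + y.1, by rw [mul_add, x.2.1, y.2.1], by rw [add_mul, x.2.2, y.2.2]⟩⟩
instance : Neg (Corner e he) :=
  ⟨fun x => ⟨-x.1, by rw [mul_neg, x.2.1], by rw [neg_mul, x.2.2]⟩⟩
instance : Mul (Corner e he) :=
  ⟨fun x y => ⟨x.1 * y.1, by rw [← mul_assoc, x.2.1], by rw [mul_assoc, y.2.2]⟩⟩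
instance : One (Corner e he) := ⟨⟨e, he, he⟩⟩

instance : AddCommGroup (Corner e he) where
  add_assoc a b c := Subtype.ext (add_assoc _ _ _)
  zero_add a := Subtype.ext (zero_add _)
  add_zero a := Subtype.ext (add_zero _)
  add_comm a b := Subtype.ext (add_comm _ _)
  neg_add_cancel a := Subtype.ext (neg_add_cancel _)
  nsmul := nsmulRec
  zsmul := zsmulRec

instance instRing : Ring (Corner e he) :=
  { (inferInstance : AddCommGroup (Corner e he)) with
    mul := (· * ·)
    one := 1
    mul_assoc := fun a b c => Subtype.ext (mul_assoc _ _ _)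
    one_mul := fun a => Subtype.ext a.2.1
    mul_one := fun a => Subtype.ext a.2.2
    left_distrib := fun a b c => Subtype.ext (left_distrib _ _ _)
    right_distrib := fun a b c => Subtype.ext (right_distrib _ _ _)
    zero_mul := fun a => Subtype.ext (zero_mul _)
    mul_zero := fun a => Subtype.ext (mul_zero _) }

section Scalars

variable {k : Type} [CommRing k] [Algebra k A]

instance : SMul k (Corner e he) :=
  ⟨fun c x => ⟨c • x.1, by rw [mul_smul_comm, x.2.1], by rw [smul_mul_assoc, x.2.2]⟩⟩

instance instModulek : Module k (Corner e he) where
  one_smul x := Subtype.ext (one_smul k x.1)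
  mul_smul c d x := Subtype.ext (mul_smul c d x.1)
  smul_zero c := Subtype.ext (smul_zero c)
  smul_add c x y := Subtype.ext (smul_add c x.1 y.1)
  add_smul c d x := Subtype.ext (add_smul c d x.1)
  zero_smul x := Subtype.ext (zero_smul k x.1)

instance instAlgebrak : Algebra k (Corner e he) :=
  Algebra.ofModule (fun c x y => Subtype.ext (smul_mul_assoc c x.1 y.1))
    (fun c x y => Subtype.ext (mul_smul_comm c x.1 y.1))

end Scalars

end Corner

/-- For a left `A`-module `M`, the subset `eM = {m | e • m = m}`, as a module over the
corner ring `eAe`. -/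
def CornerMod (e : A) (_he : e * e = e) (M : Type) [AddCommGroup M] [Module A M] : Type :=
  {m : M // e • m = m}

namespace CornerMod

variable {e : A} {he : e * e = e} {M : Type} [AddCommGroup M] [Module A M]

instance : Zero (CornerMod e he M) := ⟨⟨0, by simp⟩⟩
instance : Add (CornerMod e he M) :=
  ⟨fun x y => ⟨x.1 + y.1, by rw [smul_add, x.2, y.2]⟩⟩
instance : Neg (CornerMod e he M) := ⟨fun x => ⟨-x.1, by rw [smul_neg, x.2]⟩⟩

instance : AddCommGroup (CornerMod e he M) where
  add_assoc a b c := Subtype.ext (add_assoc _ _ _)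
  zero_add a := Subtype.ext (zero_add _)
  add_zero a := Subtype.ext (add_zero _)
  add_comm a b := Subtype.ext (add_comm _ _)
  neg_add_cancel a := Subtype.ext (neg_add_cancel _)
  nsmul := nsmulRec
  zsmul := zsmulRec

instance : SMul (Corner e he) (CornerMod e he M) :=
  ⟨fun c m => ⟨c.1 • m.1, by rw [smul_smul, c.2.1]⟩⟩

instance instModule : Module (Corner e he) (CornerMod e he M) where
  one_smul m := Subtype.ext m.2
  mul_smul x y m := Subtype.ext (mul_smul x.1 y.1 m.1)
  smul_zero x := Subtype.ext (smul_zero x.1)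
  smul_add x m m' := Subtype.ext (smul_add x.1 m.1 m'.1)
  add_smul x y m := Subtype.ext (add_smul x.1 y.1 m.1)
  zero_smul m := Subtype.ext (zero_smul A m.1)

end CornerMod

/-- The space `eAf = {x : A | e * x = x ∧ x * f = x}`, a left `eAe`-module and a right
`fAf`-module. -/
def Sandwich (e f : A) : Type := {x : A // e * x = x ∧ x * f = x}

namespace Sandwich

variable {e f : A} {he : e * e = e} {hf : f * f = f}

instance : Zero (Sandwich e f) := ⟨⟨0, by simp, by simp⟩⟩
instance : Add (Sandwich e f) :=
  ⟨fun x y => ⟨x.1 + y.1, by rw [mul_add, x.2.1, y.2.1], by rw [add_mul, x.2.2, y.2.2]⟩⟩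
instance : Neg (Sandwich e f) :=
  ⟨fun x => ⟨-x.1, by rw [mul_neg, x.2.1], by rw [neg_mul, x.2.2]⟩⟩

instance : AddCommGroup (Sandwich e f) where
  add_assoc a b c := Subtype.ext (add_assoc _ _ _)
  zero_add a := Subtype.ext (zero_add _)
  add_zero a := Subtype.ext (add_zero _)
  add_comm a b := Subtype.ext (add_comm _ _)
  neg_add_cancel a := Subtype.ext (neg_add_cancel _)
  nsmul := nsmulRec
  zsmul := zsmulRec

/-- Left action of the corner ring `eAe` on `eAf`. -/
instance : SMul (Corner e he) (Sandwich e f) :=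
  ⟨fun c x => ⟨c.1 * x.1, by rw [← mul_assoc, c.2.1], by rw [mul_assoc, x.2.2]⟩⟩

instance instModuleLeft : Module (Corner e he) (Sandwich e f) where
  one_smul x := Subtype.ext x.2.1
  mul_smul c d x := Subtype.ext (mul_assoc _ _ _)
  smul_zero c := Subtype.ext (mul_zero _)
  smul_add c x y := Subtype.ext (mul_add _ _ _)
  add_smul c d x := Subtype.ext (add_mul _ _ _)
  zero_smul x := Subtype.ext (zero_mul _)

/-- Right action of the corner ring `fAf` on `eAf`, as a left action of the opposite ring. -/
instance : SMul (Corner f hf)ᵐᵒᵖ (Sandwich e f) :=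
  ⟨fun c x => ⟨x.1 * c.unop.1, by rw [← mul_assoc, x.2.1], by rw [mul_assoc, c.unop.2.2]⟩⟩

instance instModuleRight : Module (Corner f hf)ᵐᵒᵖ (Sandwich e f) where
  one_smul x := Subtype.ext x.2.2
  mul_smul c d x := Subtype.ext (mul_assoc _ _ _).symm
  smul_zero c := Subtype.ext (zero_mul _)
  smul_add c x y := Subtype.ext (add_mul _ _ _)
  add_smul c d x := Subtype.ext (mul_add _ _ _)
  zero_smul x := Subtype.ext (mul_zero _)

end Sandwich

/-- The element `e * a * e` of the corner ring `eAe`. -/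
def cornEl {e : A} (he : e * e = e) (a : A) : Corner e he :=
  ⟨e * a * e, by conv_lhs => rw [← mul_assoc, ← mul_assoc, he], by rw [mul_assoc, he]⟩
def LIdeal (e : A) : Type := {x : A // x * e = x}
namespace LIdeal
variable {e : A}
instance : Zero (LIdeal e) := ⟨⟨0, by simp⟩⟩
instance : Add (LIdeal e) := ⟨fun x y => ⟨x.1 + y.1, by rw [add_mul, x.2, y.2]⟩⟩
instance : Neg (LIdeal e) := ⟨fun x => ⟨-x.1, by rw [neg_mul, x.2]⟩⟩
instance : AddCommGroup (LIdeal e) where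
  add_assoc a b c := Subtype.ext (add_assoc _ _ _)
  zero_add a := Subtype.ext (zero_add _)
  add_zero a := Subtype.ext (add_zero _)
  add_comm a b := Subtype.ext (add_comm _ _)
  neg_add_cancel a := Subtype.ext (neg_add_cancel _)
  nsmul := nsmulRec
  zsmul := zsmulRec
instance : SMul A (LIdeal e) := ⟨fun a x => ⟨a * x.1, by rw [mul_assoc, x.2]⟩⟩
instance instModuleA : Module A (LIdeal e) where
  one_smul x := Subtype.ext (one_mul _)
  mul_smul a b x := Subtype.ext (mul_assoc _ _ _)
  smul_zero a := Subtype.ext (mul_zero _)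
  smul_add a x y := Subtype.ext (mul_add _ _ _)
  add_smul a b x := Subtype.ext (add_mul _ _ _)
  zero_smul x := Subtype.ext (zero_mul _)
section Scalars
variable {k : Type} [CommRing k] [Algebra k A]
instance : SMul k (LIdeal e) := ⟨fun c x => ⟨c • x.1, by rw [smul_mul_assoc, x.2]⟩⟩
instance instModulek : Module k (LIdeal e) where
  one_smul x := Subtype.ext (one_smul k x.1)
  mul_smul c d x := Subtype.ext (mul_smul c d x.1)
  smul_zero c := Subtype.ext (smul_zero c)
  smul_add c x y := Subtype.ext (smul_add c x.1 y.1)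
  add_smul c d x := Subtype.ext (add_smul c d x.1)
  zero_smul x := Subtype.ext (zero_smul k x.1)
end Scalars
end LIdeal

def RIdeal (f : A) : Type := {x : A // f * x = x}
namespace RIdeal
variable {f : A}
instance : Zero (RIdeal f) := ⟨⟨0, by simp⟩⟩
instance : Add (RIdeal f) := ⟨fun x y => ⟨x.1 + y.1, by rw [mul_add, x.2, y.2]⟩⟩
instance : Neg (RIdeal f) := ⟨fun x => ⟨-x.1, by rw [mul_neg, x.2]⟩⟩
instance : AddCommGroup (RIdeal f) where
  add_assoc a b c := Subtype.ext (add_assoc _ _ _)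
  zero_add a := Subtype.ext (zero_add _)
  add_zero a := Subtype.ext (add_zero _)
  add_comm a b := Subtype.ext (add_comm _ _)
  neg_add_cancel a := Subtype.ext (neg_add_cancel _)
  nsmul := nsmulRec
  zsmul := zsmulRec
section Scalars
variable {k : Type} [CommRing k] [Algebra k A]
instance : SMul k (RIdeal f) := ⟨fun c x => ⟨c • x.1, by rw [mul_smul_comm, x.2]⟩⟩
instance instModulek : Module k (RIdeal f) where
  one_smul x := Subtype.ext (one_smul k x.1)
  mul_smul c d x := Subtype.ext (mul_smul c d x.1)
  smul_zero c := Subtype.ext (smul_zero c)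
  smul_add c x y := Subtype.ext (smul_add c x.1 y.1)
  add_smul c d x := Subtype.ext (add_smul c d x.1)
  zero_smul x := Subtype.ext (zero_smul k x.1)
end Scalars
end RIdeal

section Duals
variable (k : Type) [CommRing k] {A : Type} [Ring A] [Algebra k A]

/-- Right multiplication by `a : A` on the right ideal `fA`, as a `k`-linear map. -/
def rmulR {f : A} (a : A) : RIdeal (A := A) f →ₗ[k] RIdeal (A := A) f where
  toFun m := ⟨m.1 * a, by rw [← mul_assoc, m.2]⟩
  map_add' x y := Subtype.ext (add_mul _ _ _)
  map_smul' c x := Subtype.ext (smul_mul_assoc _ _ _)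

/-- Left multiplication by `b : A` on the left ideal `Ae`, as a `k`-linear map. -/
def lmulL {e : A} (b : A) : LIdeal (A := A) e →ₗ[k] LIdeal (A := A) e where
  toFun m := ⟨b * m.1, by rw [mul_assoc, m.2]⟩
  map_add' x y := Subtype.ext (mul_add _ _ _)
  map_smul' c x := Subtype.ext (mul_smul_comm _ _ _)

variable {f e : A}

/-- `D(fA) = Hom_k(fA, k)` is a left `A`-module via `(a • φ) m = φ (m * a)`. -/
instance : SMul A (RIdeal (A := A) f →ₗ[k] k) := ⟨fun a φ => φ.comp (rmulR k a)⟩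

instance DualRIdeal.instModuleA : Module A (RIdeal (A := A) f →ₗ[k] k) where
  one_smul φ := LinearMap.ext fun m => congrArg φ (Subtype.ext (mul_one m.1))
  mul_smul a b φ := LinearMap.ext fun m => congrArg φ (Subtype.ext (mul_assoc m.1 a b).symm)
  smul_zero a := LinearMap.ext fun m => rfl
  smul_add a φ ψ := LinearMap.ext fun m => rfl
  add_smul a b φ := LinearMap.ext fun m => by
    have h : rmulR k (f := f) (a + b) m = rmulR k a m + rmulR k b m :=
      Subtype.ext (mul_add m.1 a b)
    show φ (rmulR k (a + b) m) = φ (rmulR k a m) + φ (rmulR k b m)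
    rw [h, map_add]
  zero_smul φ := LinearMap.ext fun m => by
    have h : rmulR k (f := f) (0 : A) m = 0 := Subtype.ext (mul_zero m.1)
    show φ (rmulR k (0 : A) m) = 0
    rw [h, map_zero]

/-- `D(Ae) = Hom_k(Ae, k)` is a right `A`-module, i.e. a left `Aᵐᵒᵖ`-module, via
`(φ • a) m = φ (a * m)`. -/
instance : SMul Aᵐᵒᵖ (LIdeal (A := A) e →ₗ[k] k) := ⟨fun a φ => φ.comp (lmulL k a.unop)⟩

instance DualLIdeal.instModuleAop : Module Aᵐᵒᵖ (LIdeal (A := A) e →ₗ[k] k) where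
  one_smul φ := LinearMap.ext fun m => congrArg φ (Subtype.ext (one_mul m.1))
  mul_smul a b φ := LinearMap.ext fun m =>
    congrArg φ (Subtype.ext (mul_assoc b.unop a.unop m.1))
  smul_zero a := LinearMap.ext fun m => rfl
  smul_add a φ ψ := LinearMap.ext fun m => rfl
  add_smul a b φ := LinearMap.ext fun m => by
    have h : lmulL k (e := e) ((a + b).unop) m = lmulL k a.unop m + lmulL k b.unop m :=
      Subtype.ext (add_mul a.unop b.unop m.1)
    show φ (lmulL k ((a + b).unop) m) = φ (lmulL k a.unop m) + φ (lmulL k b.unop m)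
    rw [h, map_add]
  zero_smul φ := LinearMap.ext fun m => by
    have h : lmulL k (e := e) ((0 : Aᵐᵒᵖ).unop) m = 0 := Subtype.ext (zero_mul m.1)
    show φ (lmulL k ((0 : Aᵐᵒᵖ).unop) m) = 0
    rw [h, map_zero]

/-- Left multiplication by `a : A` on `A`, as a map of right `A`-modules. -/
def lmulOp (a : A) : A →ₗ[Aᵐᵒᵖ] A where
  toFun x := a * x
  map_add' := mul_add a
  map_smul' b x := by
    simp only [MulOpposite.smul_eq_mul_unop, RingHom.id_apply, mul_assoc]

/-- `Hom_{Aᵒᵖ}(D(Ae), A)` is a left `A`-module via `(a • ψ) φ = a * ψ φ`. -/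
instance : SMul A ((LIdeal (A := A) e →ₗ[k] k) →ₗ[Aᵐᵒᵖ] A) :=
  ⟨fun a ψ => (lmulOp a).comp ψ⟩

instance HomDualA.instModuleA : Module A ((LIdeal (A := A) e →ₗ[k] k) →ₗ[Aᵐᵒᵖ] A) where
  one_smul ψ := LinearMap.ext fun φ => one_mul _
  mul_smul a b ψ := LinearMap.ext fun φ => mul_assoc _ _ _
  smul_zero a := LinearMap.ext fun φ => mul_zero _
  smul_add a ψ χ := LinearMap.ext fun φ => mul_add _ _ _
  add_smul a b ψ := LinearMap.ext fun φ => add_mul _ _ _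
  zero_smul ψ := LinearMap.ext fun φ => zero_mul _

end Duals
/-! ### Stratification -/

section Strat

variable (A : Type) [Ring A] {n : ℕ} (e : Fin n → A)

/-- The left ideal `Ae_i`, as a submodule of the left regular module. -/
abbrev stdIdeal (i : Fin n) : Submodule A A := Submodule.span A {e i}

/-- The left submodule `Σ_{l > i} A e_l A e_i` of `A`. -/
abbrev stdTrace (i : Fin n) : Submodule A A :=
  Submodule.span A {x : A | ∃ l : Fin n, i < l ∧ ∃ b : A, x = e l * b * e i}

/-- The standard module `Δ_i = Ae_i / (Σ_{l>i} A e_l A e_i)`. -/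
abbrev StdMod (i : Fin n) :=
  ↥(stdIdeal A e i) ⧸ (Submodule.comap (stdIdeal A e i).subtype (stdTrace A e i))

/-- The submodule `Σ_{j ≥ i} A e_j (rad A) e_i` of `A`, where `rad A` is the Jacobson
radical of `A`. -/
abbrev properTrace (i : Fin n) : Submodule A A :=
  Submodule.span A {x : A | ∃ j : Fin n, i ≤ j ∧
    ∃ r ∈ Ideal.jacobson (⊥ : Ideal A), x = e j * r * e i}

/-- The proper standard module `Δ̄_i = Ae_i / (Σ_{j ≥ i} A e_j (rad A) e_i)`. -/
abbrev PStdMod (i : Fin n) :=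
  ↥(stdIdeal A e i) ⧸ (Submodule.comap (stdIdeal A e i).subtype (properTrace A e i))

/-- `M` admits a filtration `0 = M_0 ⊆ M_1 ⊆ ⋯ ⊆ M_r = M` whose successive quotients are
standard modules; i.e. `M ∈ F(Δ)`. -/
def HasStdFiltration (M : Type) [AddCommGroup M] [Module A M] : Prop :=
  ∃ (r : ℕ) (F : Fin (r + 1) → Submodule A M), Monotone F ∧ F 0 = ⊥ ∧ F (Fin.last r) = ⊤ ∧
    ∀ t : Fin r, ∃ i : Fin n,
      Nonempty ((↥(F t.succ) ⧸ (Submodule.comap (F t.succ).subtype (F t.castSucc)))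
        ≃ₗ[A] StdMod A e i)

/-- `M` admits a filtration `0 = M_0 ⊆ M_1 ⊆ ⋯ ⊆ M_r = M` whose successive quotients are
direct summands of standard modules. -/
def HasStdSummandFiltration (M : Type) [AddCommGroup M] [Module A M] : Prop :=
  ∃ (r : ℕ) (F : Fin (r + 1) → Submodule A M), Monotone F ∧ F 0 = ⊥ ∧ F (Fin.last r) = ⊤ ∧
    ∀ t : Fin r, ∃ (i : Fin n) (p q : Submodule A (StdMod A e i)), IsCompl p q ∧
      Nonempty ((↥(F t.succ) ⧸ (Submodule.comap (F t.succ).subtype (F t.castSucc)))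
        ≃ₗ[A] ↥p)

/-- The algebra `A` is directed with respect to the index order of the idempotents `e_i`:
`e_j A e_i = 0` whenever `j < i`. -/
def IsDirectedAlgebra : Prop := ∀ i j : Fin n, j < i → ∀ a : A, e j * a * e i = 0

end Strat

/-- `ProjDimLE A d M` : the left `A`-module `M` has projective dimension at most `d`,
i.e. admits a projective resolution of length at most `d`. -/
def ProjDimLE (A : Type) [Ring A] : ℕ → (M : Type) → [AddCommGroup M] → [Module A M] → Prop
  | 0, M, _, _ => Module.Projective A M
  | (d + 1), M, _, _ => ∃ (P : Type) (_ : AddCommGroup P) (_ : Module A P)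
      (f : P →ₗ[A] M), Module.Projective A P ∧ Function.Surjective f ∧
        ProjDimLE A d ↥(LinearMap.ker f)

/-- A nonzero module which is not the internal direct sum of two nonzero submodules. -/
def IsIndecModule (A : Type) [Ring A] (M : Type) [AddCommGroup M] [Module A M] : Prop :=
  Nontrivial M ∧ ∀ p q : Submodule A M, IsCompl p q → p = ⊥ ∨ q = ⊥

end

namespace DirStrat

/-! ### Algebras of the form `k + J` with `J` a nilpotent ideal -/

section LocalAlgebra

variable {k R : Type} [Field k] [Ring R] [Algebra k R]

/-- In a finite-dimensional algebra without nontrivial idempotents every element is a scalar plus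
a nilpotent: two coprime factors of the minimal polynomial would produce an idempotent. -/
theorem exists_sub_nilpotent [IsAlgClosed k] [FiniteDimensional k R] [Nontrivial R]
    (hR : ∀ f : R, f * f = f → f = 0 ∨ f = 1) (x : R) :
    ∃ c : k, IsNilpotent (x - algebraMap k R c) := by
  have hxi : IsIntegral k x := Algebra.IsIntegral.isIntegral x
  obtain ⟨c, hc⟩ := IsAlgClosed.exists_root (minpoly k x) (minpoly.degree_pos hxi).ne'
  have hp0 := minpoly.ne_zero hxi
  obtain ⟨q, hpq, hndvd⟩ := Polynomial.exists_eq_pow_rootMultiplicity_mul_and_not_dvd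
    (minpoly k x) hp0 c
  set m := (minpoly k x).rootMultiplicity c with hm
  have hmpos : 0 < m := (Polynomial.rootMultiplicity_pos hp0).2 hc
  have hcop : IsCoprime ((Polynomial.X - Polynomial.C c) ^ m) q :=
    IsCoprime.pow_left (((Polynomial.prime_X_sub_C c).coprime_iff_not_dvd).2 hndvd)
  obtain ⟨u, v, huv⟩ := hcop
  set y : R := Polynomial.aeval x ((Polynomial.X - Polynomial.C c) ^ m) with hy
  have hyx : y = (x - algebraMap k R c) ^ m := by simp [hy]
  have hyq : y * Polynomial.aeval x q = 0 := by
    rw [hy, ← map_mul, ← hpq, minpoly.aeval]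
  have huv' : Polynomial.aeval x u * y + Polynomial.aeval x v * Polynomial.aeval x q = 1 := by
    rw [hy, ← map_mul, ← map_mul, ← map_add, huv, map_one]
  have hcomm : ∀ a b : Polynomial k, Polynomial.aeval x a * Polynomial.aeval x b
      = Polynomial.aeval x b * Polynomial.aeval x a := fun a b => by
    rw [← map_mul, ← map_mul, mul_comm]
  set f := Polynomial.aeval x v * Polynomial.aeval x q with hf
  have hyf : y * f = 0 := by
    rw [hf, hcomm v q, ← mul_assoc, hyq, zero_mul]
  have hff : f * f = f := by
    have h1 : (Polynomial.aeval x u * y + f) * f = f := by rw [huv', one_mul]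
    rwa [add_mul, mul_assoc, hyf, mul_zero, zero_add] at h1
  refine ⟨c, m, ?_⟩
  rw [← hyx]
  rcases hR f hff with h0 | h1
  · exfalso
    rw [h0, add_zero] at huv'
    have hq0 : Polynomial.aeval x q = 0 := by
      calc Polynomial.aeval x q = (Polynomial.aeval x u * y) * Polynomial.aeval x q := by
            rw [huv', one_mul]
        _ = 0 := by rw [mul_assoc, hyq, mul_zero]
    have hdvd := minpoly.dvd k x hq0
    exact hndvd ((dvd_trans (Polynomial.dvd_iff_isRoot.2 hc)) hdvd)
  · rw [h1, mul_one] at hyf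
    exact hyf

/-- The structure of a local algebra with residue field `k` used below: `J` is a nilpotent
two-sided ideal with `R = k + J`. -/
structure IsKLocal (k : Type) {R : Type} [Field k] [Ring R] [Algebra k R] (J : Ideal R) :
    Prop where
  twoSided : J.IsTwoSided
  nilp : ∃ m : ℕ, J ^ m = ⊥
  residue : ∀ x : R, ∃ c : k, x - algebraMap k R c ∈ J

theorem isKLocal_jacobson [IsAlgClosed k] [FiniteDimensional k R] [Nontrivial R]
    (hR : ∀ f : R, f * f = f → f = 0 ∨ f = 1) :
    IsKLocal k (Ideal.jacobson (⊥ : Ideal R)) := by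
  have : IsArtinianRing R := IsArtinianRing.of_finite k R
  refine ⟨inferInstance, IsArtinianRing.isNilpotent_jacobson_bot, fun x => ?_⟩
  obtain ⟨c, hc⟩ := exists_sub_nilpotent (k := k) hR x
  refine ⟨c, ?_⟩
  generalize x - algebraMap k R c = z at hc
  rw [Ideal.mem_jacobson_iff]
  intro y
  obtain ⟨d, hd⟩ := exists_sub_nilpotent (k := k) hR (y * z)
  -- otherwise `y * z` is a unit, so the nilpotent `z` is left invertible
  have hd0 : d = 0 := by
    by_contra hne
    have hu : IsUnit (y * z) := by
      have h1 : IsUnit (algebraMap k R d) := (IsUnit.mk0 d hne).map _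
      have := IsNilpotent.isUnit_add_left_of_commute hd h1
        (Algebra.commutes d _).symm
      simpa using this
    obtain ⟨w, hw⟩ := hu.exists_left_inv
    obtain ⟨m, hm⟩ := hc
    have key : ∀ j : ℕ, (w * y) ^ j * z ^ j = 1 := by
      intro j
      induction j with
      | zero => simp
      | succ j ih =>
        rw [pow_succ, pow_succ', mul_assoc, ← mul_assoc (w * y) z, mul_assoc w y z, hw, one_mul, ih]
    have := key m
    rw [hm, mul_zero] at this
    exact zero_ne_one this
  subst hd0
  rw [map_zero, sub_zero] at hd
  obtain ⟨w, hw⟩ := hd.isUnit_add_one.exists_left_inv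
  refine ⟨w, ?_⟩
  rw [mul_add, mul_one, ← mul_assoc] at hw
  rw [hw, sub_self]
  exact zero_mem _

variable {J : Ideal R}

/-- The left annihilator of `J` is nonzero: take a nonzero element of the last nonvanishing power
of `J`. -/
theorem IsKLocal.exists_ann [Nontrivial R] (hJ : IsKLocal k J) :
    ∃ s : R, s ≠ 0 ∧ ∀ x ∈ J, s * x = 0 := by
  classical
  have hex := hJ.nilp
  set m := Nat.find hex with hm
  have hmJ : J ^ m = ⊥ := Nat.find_spec hex
  have hm0 : m ≠ 0 := by
    intro h0
    rw [h0, Submodule.pow_zero] at hmJ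
    have h1 : (1 : R) ∈ (1 : Ideal R) := by
      rw [Ideal.one_eq_top]; trivial
    rw [hmJ] at h1
    exact one_ne_zero ((Submodule.mem_bot R).1 h1)
  obtain ⟨l, hl⟩ := Nat.exists_eq_succ_of_ne_zero hm0
  have hne : J ^ l ≠ ⊥ := Nat.find_min hex (by omega)
  obtain ⟨s, hs, hs0⟩ := Submodule.exists_mem_ne_zero_of_ne_bot hne
  refine ⟨s, hs0, fun x hx => ?_⟩
  have : s * x ∈ J ^ l * J := Ideal.mul_mem_mul hs hx
  rw [← Submodule.pow_succ, ← Nat.succ_eq_add_one, ← hl, hmJ] at this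
  simpa using this

variable {V P K : Type} [AddCommGroup V] [Module R V] [AddCommGroup P] [Module R P]
  [AddCommGroup K] [Module R K]

theorem IsKLocal.isNilpotent_end (hJ : IsKLocal k J) (t : Module.End R V)
    (ht : ∀ x, t x ∈ J • (⊤ : Submodule R V)) : IsNilpotent t := by
  obtain ⟨m, hm⟩ := hJ.nilp
  have key : ∀ j : ℕ, ∀ x, (t ^ j) x ∈ J ^ j • (⊤ : Submodule R V) := by
    intro j
    induction j with
    | zero =>
      intro x
      rw [Submodule.pow_zero, Ideal.one_eq_top, Submodule.top_smul]; trivial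
    | succ j ih =>
      intro x
      rw [pow_succ', Submodule.pow_succ, Submodule.mul_smul]
      have h1 : t ((t ^ j) x) ∈ (J ^ j • (⊤ : Submodule R V)).map t :=
        Submodule.mem_map_of_mem (ih x)
      rw [Submodule.map_smul''] at h1
      refine Submodule.smul_mono le_rfl ?_ h1
      rintro _ ⟨y, -, rfl⟩
      exact ht y
  refine ⟨m, LinearMap.ext fun x => ?_⟩
  have := key m x
  rw [hm, Submodule.bot_smul] at this
  simpa using this

/-- Conversely, `J` contains everything killed by a nonzero left annihilator `s` of `J`, because
`s` is not killed by any nonzero scalar. -/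
theorem IsKLocal.mem_of_ann (hJ : IsKLocal k J) {s : R} (hs0 : s ≠ 0)
    (hs : ∀ x ∈ J, s * x = 0) {x : R} (hx : s * x = 0) : x ∈ J := by
  obtain ⟨c, hc⟩ := hJ.residue x
  have h1 := hs _ hc
  rw [mul_sub, hx, zero_sub, neg_eq_zero, ← Algebra.commutes, ← Algebra.smul_def,
    smul_eq_zero] at h1
  have hc0 : c = 0 := h1.resolve_right hs0
  simpa [hc0] using hc

theorem IsKLocal.mem_smul_top_of_ann (hJ : IsKLocal k J) [Module.Projective R K]
    {s : R} (hs0 : s ≠ 0) (hs : ∀ x ∈ J, s * x = 0) {x : K} (hx : s • x = 0) :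
    x ∈ J • (⊤ : Submodule R K) := by
  obtain ⟨σ, hσ⟩ := Module.projective_def.1 (inferInstance : Module.Projective R K)
  have h1 : s • σ x = 0 := by rw [← map_smul, hx, map_zero]
  rw [← hσ x, Finsupp.linearCombination_apply, Finsupp.sum]
  refine Submodule.sum_mem _ fun b _ => Submodule.smul_mem_smul ?_ trivial
  refine hJ.mem_of_ann hs0 hs ?_
  simpa using DFunLike.congr_fun h1 b

/-- An injection `K → P` of projective modules over `R` splits. A nonzero left annihilator `s` of
`J` detects `JK` inside `K`, so the injection stays injective modulo `J`, where it splits over `k`.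
A lift of that splitting is a retraction up to a nilpotent endomorphism of `K`. -/
theorem IsKLocal.exists_retraction [Nontrivial R] (hJ : IsKLocal k J) [Module.Projective R K]
    [Module.Projective R P] (f : K →ₗ[R] P) (hf : Function.Injective f) :
    ∃ g : P →ₗ[R] K, g.comp f = LinearMap.id := by
  obtain ⟨s, hs0, hs⟩ := hJ.exists_ann
  let _ : Module k K := Module.compHom K (algebraMap k R)
  let _ : Module k P := Module.compHom P (algebraMap k R)
  have hK : IsScalarTower k R K := IsScalarTower.of_algebraMap_smul fun _ _ => rfl
  have hP : IsScalarTower k R P := IsScalarTower.of_algebraMap_smul fun _ _ => rfl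
  set JK := J • (⊤ : Submodule R K)
  set JP := J • (⊤ : Submodule R P)
  have hle : JK ≤ JP.comap f := by
    rw [← Submodule.map_le_iff_le_comap, Submodule.map_smul'']
    exact Submodule.smul_mono le_rfl le_top
  -- the map induced by `f` modulo the radical
  let fbar : (K ⧸ JK) →ₗ[R] (P ⧸ JP) := JK.mapQ JP f hle
  have hsJP : ∀ y ∈ JP, s • y = 0 := by
    intro y hy
    induction hy using Submodule.smul_induction_on' with
    | smul r hr p _ => rw [smul_smul, hs r hr, zero_smul]
    | add x _ y _ hx hy => rw [smul_add, hx, hy, add_zero]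
  have hfbar : LinearMap.ker (fbar.restrictScalars k) = ⊥ := by
    rw [eq_bot_iff]
    intro x hx
    obtain ⟨x, rfl⟩ := JK.mkQ_surjective x
    have hx' : fbar (JK.mkQ x) = 0 := hx
    have hfx : f x ∈ JP := by
      simpa [fbar] using hx'
    have hsx : s • x = 0 := hf (by rw [map_smul, hsJP _ hfx, map_zero])
    have : x ∈ JK := hJ.mem_smul_top_of_ann hs0 hs hsx
    simpa using this
  obtain ⟨h, hh⟩ := LinearMap.exists_leftInverse_of_injective _ hfbar
  have hJq : ∀ (r : R), r ∈ J → ∀ y : P ⧸ JP, r • y = 0 := by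
    intro r hr y
    obtain ⟨y, rfl⟩ := JP.mkQ_surjective y
    rw [← map_smul]
    exact (Submodule.Quotient.mk_eq_zero _).2 (Submodule.smul_mem_smul hr trivial)
  have hJq' : ∀ (r : R), r ∈ J → ∀ y : K ⧸ JK, r • y = 0 := by
    intro r hr y
    obtain ⟨y, rfl⟩ := JK.mkQ_surjective y
    rw [← map_smul]
    exact (Submodule.Quotient.mk_eq_zero _).2 (Submodule.smul_mem_smul hr trivial)
  -- a `k`-linear map is `R`-linear because `R` acts through `k` on both sides
  let hR : (P ⧸ JP) →ₗ[R] (K ⧸ JK) :=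
    { toFun := h
      map_add' := map_add h
      map_smul' := by
        intro r y
        obtain ⟨c, hc⟩ := hJ.residue r
        have h1 : r • y = c • y := by
          have := hJq _ hc y
          rwa [sub_smul, algebraMap_smul, sub_eq_zero] at this
        have h2 : r • h y = c • h y := by
          have := hJq' _ hc (h y)
          rwa [sub_smul, algebraMap_smul, sub_eq_zero] at this
        rw [RingHom.id_apply, h1, h2, map_smul] }
  obtain ⟨g, hg⟩ := Module.projective_lifting_property JK.mkQ (hR.comp JP.mkQ)
    JK.mkQ_surjective
  have ht : IsNilpotent (g.comp f - LinearMap.id : Module.End R K) := by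
    refine hJ.isNilpotent_end _ fun x => ?_
    have h1 : JK.mkQ (g (f x)) = JK.mkQ x := by
      have := LinearMap.congr_fun hg (f x)
      have h2 := LinearMap.congr_fun hh (JK.mkQ x)
      exact this.trans h2
    have : JK.mkQ (g (f x) - x) = 0 := by rw [map_sub, h1, sub_self]
    exact (Submodule.Quotient.mk_eq_zero _).1 this
  have hu : IsUnit (g.comp f : Module.End R K) := by
    have := ht.isUnit_add_one
    have h2 : (g.comp f - LinearMap.id + 1 : Module.End R K) = g.comp f := by
      rw [← Module.End.one_eq_id, sub_add_cancel]
    rwa [h2] at this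
  obtain ⟨w, hw⟩ := hu.exists_left_inv
  exact ⟨w.comp g, hw⟩

/-- The cokernel of an injection of projective modules over `R` is projective; by iteration, so is
every module of finite projective dimension. -/
theorem IsKLocal.projective_of_exact [Nontrivial R] (hJ : IsKLocal k J) [Module.Projective R K]
    [Module.Projective R P] (f : K →ₗ[R] P) (g : P →ₗ[R] V) (hf : Function.Injective f)
    (hg : Function.Surjective g) (hfg : Function.Exact f g) : Module.Projective R V := by
  obtain ⟨r, hr⟩ := hJ.exists_retraction f hf
  have hs := (hfg.split_tfae' (f := f) (g := g)).out 1 0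
  obtain ⟨-, s, hs⟩ := hs.1 ⟨hg, r, hr⟩
  exact Module.Projective.of_split s g hs

/-- Finitely generated projective modules over `R` are free: a `k`-basis of `V / JV` lifts to an
`R`-basis of `V`. -/
theorem IsKLocal.exists_basis (hJ : IsKLocal k J) [FiniteDimensional k R]
    [Module.Projective R V] [Module.Finite R V] :
    ∃ r : ℕ, Nonempty (Module.Basis (Fin r) R V) := by
  let _ : Module k V := Module.compHom V (algebraMap k R)
  have hV : IsScalarTower k R V := IsScalarTower.of_algebraMap_smul fun _ _ => rfl
  have : Module.Finite k V := Module.Finite.trans R V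
  set JV := J • (⊤ : Submodule R V) with hJV
  have : Module.Finite k (V ⧸ JV) :=
    Module.Finite.of_surjective (JV.mkQ.restrictScalars k) JV.mkQ_surjective
  let b := Module.finBasis k (V ⧸ JV)
  set r := Module.finrank k (V ⧸ JV)
  choose v hv using fun i => JV.mkQ_surjective (b i)
  let φ : (Fin r → R) →ₗ[R] V := Fintype.linearCombination R v
  have hJq : ∀ (a : R), a ∈ J → ∀ y : V ⧸ JV, a • y = 0 := by
    intro a ha y
    obtain ⟨y, rfl⟩ := JV.mkQ_surjective y
    rw [← map_smul]
    exact (Submodule.Quotient.mk_eq_zero _).2 (Submodule.smul_mem_smul ha trivial)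
  have hsup : LinearMap.range φ ⊔ JV = ⊤ := by
    rw [eq_top_iff]
    intro x _
    have hx : JV.mkQ (x - φ (fun i => algebraMap k R (b.repr (JV.mkQ x) i))) = 0 := by
      rw [map_sub, sub_eq_zero, Fintype.linearCombination_apply, map_sum]
      conv_lhs => rw [← b.sum_repr (JV.mkQ x)]
      refine Finset.sum_congr rfl fun i _ => ?_
      rw [map_smul, hv, algebraMap_smul]
    have hx' : x - φ (fun i => algebraMap k R (b.repr (JV.mkQ x) i)) ∈ JV :=
      (Submodule.Quotient.mk_eq_zero _).1 hx
    rw [← add_sub_cancel (φ (fun i => algebraMap k R (b.repr (JV.mkQ x) i))) x]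
    exact Submodule.add_mem_sup ⟨_, rfl⟩ hx'
  have hsurj : Function.Surjective φ := by
    obtain ⟨m, hm⟩ := hJ.nilp
    -- Nakayama for the nilpotent ideal `J`
    have key : ∀ j : ℕ, LinearMap.range φ ⊔ J ^ j • (⊤ : Submodule R V) = ⊤ := by
      intro j
      induction j with
      | zero => rw [Submodule.pow_zero, Ideal.one_eq_top, Submodule.top_smul, sup_top_eq]
      | succ j ih =>
        rw [eq_top_iff]
        conv_lhs => rw [← ih]
        refine sup_le le_sup_left ?_
        conv_lhs => rw [← hsup]
        rw [Submodule.smul_sup, hJV, ← Submodule.mul_smul, ← Submodule.pow_succ]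
        exact sup_le (Submodule.smul_le_right.trans le_sup_left) le_sup_right
    have := key m
    rw [hm, Submodule.bot_smul, sup_bot_eq] at this
    exact LinearMap.range_eq_top.1 this
  have hker : ∀ x, φ x = 0 → x ∈ J • (⊤ : Submodule R (Fin r → R)) := by
    intro x hx
    choose c hc using fun i => hJ.residue (x i)
    have h1 : ∑ i, c i • b i = 0 := by
      have h2 : JV.mkQ (φ x) = 0 := by rw [hx, map_zero]
      rw [Fintype.linearCombination_apply, map_sum] at h2
      rw [← h2]
      refine Finset.sum_congr rfl fun i _ => ?_
      rw [map_smul, hv]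
      have := hJq _ (hc i) (b i)
      rw [sub_smul, algebraMap_smul, sub_eq_zero] at this
      exact this.symm
    have hc0 := Fintype.linearIndependent_iff.1 b.linearIndependent c h1
    have hxe : x = ∑ i, x i • (Pi.single i (1 : R) : Fin r → R) := by
      simp [Pi.single_apply, funext_iff, Finset.sum_apply]
    rw [hxe]
    refine Submodule.sum_mem _ fun i _ => Submodule.smul_mem_smul ?_ trivial
    have := hc i
    rwa [hc0 i, map_zero, sub_zero] at this
  obtain ⟨ψ, hψ⟩ := Module.projective_lifting_property φ LinearMap.id hsurj
  have hψ' : ∀ y, φ (ψ y) = y := fun y => LinearMap.congr_fun hψ y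
  -- the projection onto `ker φ` is idempotent and nilpotent
  have hnil : IsNilpotent (1 - ψ.comp φ : Module.End R (Fin r → R)) := by
    refine hJ.isNilpotent_end _ fun x => hker _ ?_
    simp [hψ']
  have hid : IsIdempotentElem (1 - ψ.comp φ : Module.End R (Fin r → R)) := by
    refine IsIdempotentElem.one_sub (LinearMap.ext fun x => ?_)
    simp [hψ']
  have hzero : (1 - ψ.comp φ : Module.End R (Fin r → R)) = 0 := by
    obtain ⟨m, hm⟩ := hnil
    have h3 := hid.pow_succ_eq m
    rwa [pow_succ, hm, zero_mul, eq_comm] at h3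
  have hinj : Function.Injective φ := by
    rw [← LinearMap.ker_eq_bot, eq_bot_iff]
    intro x hx
    have hx0 : φ x = 0 := hx
    have := LinearMap.congr_fun hzero x
    simpa [hx0] using this
  exact ⟨r, ⟨Module.Basis.ofEquivFun (LinearEquiv.ofBijective φ ⟨hinj, hsurj⟩).symm⟩⟩

end LocalAlgebra

/-! ### Classes of modules closed under extensions -/

section Ext

variable {A : Type} [Ring A]

/-- A class of left `A`-modules that contains the zero modules and is closed under extensions
(hence also under isomorphisms). -/
structure ExtClosed (C : ∀ (M : Type) [AddCommGroup M] [Module A M], Prop) : Prop where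
  zero : ∀ (M : Type) [AddCommGroup M] [Module A M], Subsingleton M → C M
  ext : ∀ (N M Q : Type) [AddCommGroup N] [Module A N] [AddCommGroup M] [Module A M]
    [AddCommGroup Q] [Module A Q] (f : N →ₗ[A] M) (g : M →ₗ[A] Q),
    Function.Injective f → Function.Surjective g → Function.Exact f g → C N → C Q → C M

variable {C : ∀ (M : Type) [AddCommGroup M] [Module A M], Prop}

theorem ExtClosed.of_equiv (hC : ExtClosed C) {N M : Type} [AddCommGroup N] [Module A N]
    [AddCommGroup M] [Module A M] (f : N ≃ₗ[A] M) (h : C N) : C M :=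
  hC.ext N M PUnit f.toLinearMap 0 f.injective (fun _ => ⟨0, Subsingleton.elim _ _⟩)
    (fun x => ⟨fun _ => f.surjective x, fun _ => rfl⟩) h (hC.zero _ inferInstance)

theorem ExtClosed.of_ker (hC : ExtClosed C) {M Q : Type} [AddCommGroup M] [Module A M]
    [AddCommGroup Q] [Module A Q] (g : M →ₗ[A] Q) (hg : Function.Surjective g)
    (h : C ↥(LinearMap.ker g)) (hQ : C Q) : C M :=
  hC.ext _ M Q (LinearMap.ker g).subtype g Subtype.val_injective hg
    (LinearMap.exact_subtype_ker_map g) h hQ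

theorem ExtClosed.pi (hC : ExtClosed C) {Q : Type} [AddCommGroup Q] [Module A Q] (hQ : C Q)
    (r : ℕ) : C (Fin r → Q) := by
  induction r with
  | zero => exact hC.zero _ inferInstance
  | succ r ih =>
    refine hC.ext (Fin r → Q) _ Q (LinearMap.pi (Fin.cons 0 fun i => LinearMap.proj i))
      (LinearMap.proj 0) ?_ (fun q => ⟨fun _ => q, rfl⟩) ?_ ih hQ
    · intro x y hxy
      funext i
      simpa using congrFun hxy i.succ
    · intro x
      constructor
      · intro hx
        refine ⟨fun i => x i.succ, funext fun i => ?_⟩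
        refine Fin.cases ?_ (fun i => ?_) i
        · simpa using hx.symm
        · simp
      · rintro ⟨y, rfl⟩
        simp

variable {n : ℕ} {e : Fin n → A}

/-- The induction principle for `F(Δ)`: it is contained in every extension-closed class that
contains the standard modules. -/
theorem ExtClosed.of_hasStd (hC : ExtClosed C) (hΔ : ∀ i, C (StdMod A e i))
    {M : Type} [AddCommGroup M] [Module A M] (hM : HasStdFiltration A e M) : C M := by
  obtain ⟨r, F, hmono, h0, htop, hq⟩ := hM
  have key : ∀ t : Fin (r + 1), C ↥(F t) := by
    intro t
    induction t using Fin.induction with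
    | zero => rw [h0]; exact hC.zero _ inferInstance
    | succ t ih =>
      obtain ⟨i, ⟨φ⟩⟩ := hq t
      refine hC.ext _ _ _ (Submodule.inclusion (hmono t.castSucc_lt_succ.le))
        (φ.toLinearMap.comp (Submodule.mkQ _)) (Submodule.inclusion_injective _)
        (φ.surjective.comp (Submodule.mkQ_surjective _)) ?_ ih (hΔ i)
      intro x
      constructor
      · intro hx
        have h1 : Submodule.Quotient.mk x = 0 := φ.injective (hx.trans (map_zero φ).symm)
        rw [Submodule.Quotient.mk_eq_zero] at h1
        exact ⟨⟨x.1, h1⟩, rfl⟩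
      · rintro ⟨y, rfl⟩
        have h1 : Submodule.Quotient.mk (p := Submodule.comap (F t.succ).subtype (F t.castSucc))
          (Submodule.inclusion (hmono t.castSucc_lt_succ.le) y) = 0 := by
          rw [Submodule.Quotient.mk_eq_zero]; exact y.2
        change φ (Submodule.Quotient.mk _) = 0
        rw [h1, map_zero]
  have := key (Fin.last r)
  rw [htop] at this
  exact hC.of_equiv Submodule.topEquiv this

variable (e) in
/-- The subquotient `N' / N` of `M` is isomorphic to `Δ_i`. -/
def StdStep {M : Type} [AddCommGroup M] [Module A M] (N N' : Submodule A M) (i : Fin n) : Prop :=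
  Nonempty ((↥N' ⧸ (Submodule.comap N'.subtype N)) ≃ₗ[A] StdMod A e i)

/-- `N' / N ≅ Δ_i` as the existence of a surjection `N' → Δ_i` with kernel `N`, which avoids
handling the quotient. -/
theorem stdStep_iff {M : Type} [AddCommGroup M] [Module A M] {N N' : Submodule A M} {i : Fin n} :
    StdStep e N N' i ↔
      ∃ g : ↥N' →ₗ[A] StdMod A e i, Function.Surjective g ∧ ∀ x, g x = 0 ↔ x.1 ∈ N := by
  constructor
  · rintro ⟨φ⟩
    refine ⟨φ.toLinearMap.comp (Submodule.mkQ _), φ.surjective.comp (Submodule.mkQ_surjective _),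
      fun x => ?_⟩
    simp
  · rintro ⟨g, hg, hx⟩
    have : Submodule.comap N'.subtype N = LinearMap.ker g := by
      ext x; simp [hx]
    unfold StdStep
    rw [this]
    exact ⟨g.quotKerEquivOfSurjective hg⟩

theorem StdStep.map {N M : Type} [AddCommGroup N] [Module A N] [AddCommGroup M] [Module A M]
    {i : Fin n} {L L' : Submodule A N} (h : StdStep e L L' i) (f : N →ₗ[A] M)
    (hf : Function.Injective f) : StdStep e (L.map f) (L'.map f) i := by
  rw [stdStep_iff] at h ⊢
  obtain ⟨p, hp, hp'⟩ := h
  let ε := Submodule.equivMapOfInjective f hf L'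
  refine ⟨p.comp ε.symm.toLinearMap, hp.comp ε.symm.surjective, fun x => ?_⟩
  obtain ⟨y, rfl⟩ := ε.surjective x
  have hy : (ε y : M) = f y.1 := Submodule.coe_equivMapOfInjective_apply f hf _ _
  simp [hp', hy, hf.eq_iff]

theorem hasStd_of_equiv {N M : Type} [AddCommGroup N] [Module A N] [AddCommGroup M] [Module A M]
    (f : N ≃ₗ[A] M) (hN : HasStdFiltration A e N) : HasStdFiltration A e M := by
  obtain ⟨r, F, hmono, h0, htop, hq⟩ := hN
  refine ⟨r, fun t => (F t).map f.toLinearMap, fun s t hst => Submodule.map_mono (hmono hst),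
    by simp [h0], by simp [htop], fun t => ?_⟩
  obtain ⟨i, hi⟩ := hq t
  exact ⟨i, StdStep.map hi f.toLinearMap f.injective⟩

/-- An extension of `Δ_i` by a module `N` in `F(Δ)` lies in `F(Δ)`. -/
theorem hasStd_snoc {N M : Type} [AddCommGroup N] [Module A N] [AddCommGroup M] [Module A M]
    {i : Fin n} (f : N →ₗ[A] M) (g : M →ₗ[A] StdMod A e i) (hf : Function.Injective f)
    (hg : Function.Surjective g) (hfg : Function.Exact f g) (hN : HasStdFiltration A e N) :
    HasStdFiltration A e M := by
  obtain ⟨r, F, hmono, h0, htop, hq⟩ := hN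
  let G : Fin (r + 1 + 1) → Submodule A M :=
    Fin.snoc (α := fun _ => Submodule A M) (fun t => (F t).map f) ⊤
  have hGc : ∀ t : Fin (r + 1), G t.castSucc = (F t).map f := fun t => Fin.snoc_castSucc _ _ _
  have hGl : G (Fin.last (r + 1)) = ⊤ := Fin.snoc_last _ _
  refine ⟨r + 1, G, ?_, ?_, hGl, ?_⟩
  · rw [Fin.monotone_iff_le_succ]
    intro t
    refine Fin.lastCases ?_ (fun t => ?_) t
    · rw [Fin.succ_last, hGl]; exact le_top
    · rw [hGc, Fin.succ_castSucc, hGc]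
      exact Submodule.map_mono (hmono t.castSucc_lt_succ.le)
  · have := hGc 0
    rwa [h0, Submodule.map_bot] at this
  · intro t
    change ∃ i, StdStep e (G t.castSucc) (G t.succ) i
    refine Fin.lastCases ?_ (fun t => ?_) t
    · refine ⟨i, ?_⟩
      rw [Fin.succ_last, hGl, hGc, htop, stdStep_iff]
      refine ⟨g.comp (Submodule.subtype ⊤), fun y => ?_, fun x => ?_⟩
      · obtain ⟨x, hx⟩ := hg y
        exact ⟨⟨x, trivial⟩, hx⟩
      · simpa using hfg x.1
    · obtain ⟨j, hj⟩ := hq t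
      change StdStep e _ _ _ at hj
      refine ⟨j, ?_⟩
      rw [hGc, Fin.succ_castSucc, hGc]
      exact hj.map f hf

variable (e) in
/-- `F(Δ)` is extension-closed: a filtration of the quotient is pulled back step by step. -/
theorem extClosed_hasStd : ExtClosed (A := A) (fun M _ _ => HasStdFiltration A e M) where
  zero M _ _ hM := ⟨0, fun _ => ⊥, fun _ _ _ => le_rfl, rfl,
    Subsingleton.elim (α := Submodule A M) _ _, fun t => t.elim0⟩
  ext N M Q _ _ _ _ _ _ f g hf hg hfg hN hQ := by
    obtain ⟨r, F, hmono, h0, htop, hq⟩ := hQ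
    have key : ∀ t : Fin (r + 1), HasStdFiltration A e ↥((F t).comap g) := by
      intro t
      induction t using Fin.induction with
      | zero =>
        rw [h0]
        refine hasStd_of_equiv (LinearEquiv.ofBijective (f.codRestrict _ fun x => ?_)
          ⟨fun x y hxy => hf (congrArg Subtype.val hxy), fun x => ?_⟩) hN
        · exact (hfg (f x)).2 ⟨x, rfl⟩
        · obtain ⟨y, hy⟩ := (hfg x.1).1 x.2
          exact ⟨y, Subtype.ext hy⟩
      | succ t ih =>
        obtain ⟨i, hi⟩ := hq t
        change StdStep e _ _ _ at hi
        rw [stdStep_iff] at hi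
        obtain ⟨p, hp, hp'⟩ := hi
        have hle := hmono t.castSucc_lt_succ.le
        refine hasStd_snoc (Submodule.inclusion (Submodule.comap_mono hle))
          (p.comp ((g.comp (Submodule.subtype _)).codRestrict _ fun x => x.2))
          (Submodule.inclusion_injective _) ?_ ?_ ih
        · refine hp.comp fun y => ?_
          obtain ⟨x, hx⟩ := hg y.1
          exact ⟨⟨x, by rw [Submodule.mem_comap, hx]; exact y.2⟩, Subtype.ext hx⟩
        · intro x
          rw [LinearMap.comp_apply, hp']
          exact ⟨fun hx => ⟨⟨x.1, hx⟩, rfl⟩, by rintro ⟨y, rfl⟩; exact y.2⟩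
    have := key (Fin.last r)
    rw [htop, Submodule.comap_top] at this
    exact hasStd_of_equiv Submodule.topEquiv this

theorem projDim_zero {M : Type} [AddCommGroup M] [Module A M] :
    ProjDimLE A 0 M ↔ Module.Projective A M := by rw [ProjDimLE]

theorem projDim_succ {d : ℕ} {M : Type} [AddCommGroup M] [Module A M] :
    ProjDimLE A (d + 1) M ↔ ∃ (P : Type) (_ : AddCommGroup P) (_ : Module A P)
      (f : P →ₗ[A] M), Module.Projective A P ∧ Function.Surjective f ∧
        ProjDimLE A d ↥(LinearMap.ker f) := by rw [ProjDimLE]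

theorem projDim_mono {d : ℕ} {M : Type} [AddCommGroup M] [Module A M] (h : ProjDimLE A d M) :
    ProjDimLE A (d + 1) M := by
  induction d generalizing M with
  | zero =>
    rw [projDim_zero] at h
    refine projDim_succ.2 ⟨M, _, _, LinearMap.id, h, Function.surjective_id, ?_⟩
    rw [LinearMap.ker_id, projDim_zero]
    infer_instance
  | succ d ih =>
    obtain ⟨P, _, _, f, hP, hf, hd⟩ := projDim_succ.1 h
    exact projDim_succ.2 ⟨P, _, _, f, hP, hf, ih hd⟩

theorem projDim_le {d d' : ℕ} (hdd : d ≤ d') {M : Type} [AddCommGroup M] [Module A M]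
    (h : ProjDimLE A d M) : ProjDimLE A d' M := by
  induction hdd with
  | refl => exact h
  | step _ ih => exact projDim_mono ih

theorem projective_of_ext {N M Q : Type} [AddCommGroup N] [Module A N] [AddCommGroup M]
    [Module A M] [AddCommGroup Q] [Module A Q] (f : N →ₗ[A] M) (g : M →ₗ[A] Q)
    (hf : Function.Injective f) (hg : Function.Surjective g) (hfg : Function.Exact f g)
    [Module.Projective A N] [Module.Projective A Q] : Module.Projective A M := by
  obtain ⟨s, hs⟩ := Module.projective_lifting_property g LinearMap.id hg
  obtain ⟨ε, -⟩ := hfg.splitSurjectiveEquiv hf ⟨s, hs⟩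
  exact Module.Projective.of_equiv ε.symm

/-- Projective dimension at most `d` is preserved by extensions, by the horseshoe lemma. -/
theorem projDim_ext {d : ℕ} {N M Q : Type} [AddCommGroup N] [Module A N] [AddCommGroup M]
    [Module A M] [AddCommGroup Q] [Module A Q] (f : N →ₗ[A] M) (g : M →ₗ[A] Q)
    (hf : Function.Injective f) (hg : Function.Surjective g) (hfg : Function.Exact f g)
    (hN : ProjDimLE A d N) (hQ : ProjDimLE A d Q) : ProjDimLE A d M := by
  induction d generalizing N M Q with
  | zero =>
    rw [projDim_zero] at *
    exact projective_of_ext f g hf hg hfg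
  | succ d ih =>
    obtain ⟨P, _, _, p, hP, hp, hPd⟩ := projDim_succ.1 hN
    obtain ⟨P', _, _, q, hP', hq, hPd'⟩ := projDim_succ.1 hQ
    obtain ⟨s, hs⟩ := Module.projective_lifting_property g q hg
    have hs' : ∀ y, g (s y) = q y := fun y => LinearMap.congr_fun hs y
    have hgf : ∀ x, g (f x) = 0 := fun x => (hfg (f x)).2 ⟨x, rfl⟩
    let h : P × P' →ₗ[A] M := (f.comp p).coprod s
    have hh : ∀ x, h x = f (p x.1) + s x.2 := fun x => rfl
    refine projDim_succ.2 ⟨P × P', _, _, h, inferInstance, ?_, ?_⟩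
    · intro m
      obtain ⟨y, hy⟩ := hq (g m)
      obtain ⟨x, hx⟩ := (hfg (m - s y)).1 (by rw [map_sub, hs', hy, sub_self])
      obtain ⟨z, rfl⟩ := hp x
      exact ⟨(z, y), by rw [hh, hx, sub_add_cancel]⟩
    · refine ih (N := ↥(LinearMap.ker p)) (Q := ↥(LinearMap.ker q))
        (((LinearMap.inl A P P').comp (LinearMap.ker p).subtype).codRestrict (LinearMap.ker h)
          fun x => ?_)
        (((LinearMap.snd A P P').comp (LinearMap.ker h).subtype).codRestrict (LinearMap.ker q)
          fun x => ?_) ?_ ?_ ?_ hPd hPd'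
      · have hx : p x.1 = 0 := x.2
        simp [hh, hx]
      · have hx : h x.1 = 0 := x.2
        have := congrArg g hx
        rw [hh, map_add, hgf, hs', zero_add, map_zero] at this
        exact this
      · intro x y hxy
        have := congrArg (fun z => (Subtype.val z).1) hxy
        exact Subtype.ext this
      · intro y
        have hy : q y.1 = 0 := y.2
        obtain ⟨x, hx⟩ := (hfg (s y.1)).1 (by rw [hs', hy])
        obtain ⟨z, rfl⟩ := hp x
        refine ⟨⟨(-z, y.1), ?_⟩, rfl⟩
        rw [LinearMap.mem_ker, hh]
        simp [hx]
      · intro x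
        constructor
        · intro hx
          have h2 : x.1.2 = 0 := congrArg Subtype.val hx
          have hx' : h x.1 = 0 := x.2
          rw [hh, h2, map_zero, add_zero] at hx'
          refine ⟨⟨x.1.1, hf (hx'.trans (map_zero f).symm)⟩, Subtype.ext (Prod.ext rfl h2.symm)⟩
        · rintro ⟨y, rfl⟩
          rfl

theorem extClosed_projDim :
    ExtClosed (A := A) (fun M _ _ => ∃ d : ℕ, ProjDimLE A d M) where
  zero M _ _ _ := ⟨0, projDim_zero.2 inferInstance⟩
  ext N M Q _ _ _ _ _ _ f g hf hg hfg := by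
    rintro ⟨d, hd⟩ ⟨d', hd'⟩
    exact ⟨max d d', projDim_ext f g hf hg hfg (projDim_le (le_max_left _ _) hd)
      (projDim_le (le_max_right _ _) hd')⟩

end Ext

/-! ### The functor `M ↦ eM` -/

section CornerFunctor

variable {A : Type} [Ring A] {e : A} {he : e * e = e}
variable {N M Q : Type} [AddCommGroup N] [Module A N] [AddCommGroup M] [Module A M]
  [AddCommGroup Q] [Module A Q]

/-- The map `eM → eN` induced by an `A`-linear map `M → N`. -/
def cornerMap (he : e * e = e) (f : M →ₗ[A] N) :
    CornerMod e he M →ₗ[Corner e he] CornerMod e he N where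
  toFun x := ⟨f x.1, by rw [← map_smul, x.2]⟩
  map_add' x y := Subtype.ext (map_add f x.1 y.1)
  map_smul' c x := Subtype.ext (map_smul f c.1 x.1)

/-- The projection `M → eM`, as a plain function. -/
def cornerProj (he : e * e = e) (x : M) : CornerMod e he M :=
  ⟨e • x, by rw [smul_smul, he]⟩

theorem cornerProj_add (x y : M) :
    cornerProj he (x + y) = cornerProj he x + cornerProj he y :=
  Subtype.ext (smul_add e x y)

theorem cornerProj_val (x : CornerMod e he M) : cornerProj he x.1 = x := Subtype.ext x.2

theorem cornerMap_injective {f : M →ₗ[A] N} (hf : Function.Injective f) :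
    Function.Injective (cornerMap he f) :=
  fun _ _ h => Subtype.ext (hf (congrArg Subtype.val h))

theorem cornerMap_surjective {f : M →ₗ[A] N} (hf : Function.Surjective f) :
    Function.Surjective (cornerMap he f) := by
  intro y
  obtain ⟨x, hx⟩ := hf y.1
  exact ⟨cornerProj he x, Subtype.ext ((map_smul f e x).trans (by rw [hx, y.2]))⟩

theorem cornerMap_exact {f : N →ₗ[A] M} {g : M →ₗ[A] Q} (h : Function.Exact f g) :
    Function.Exact (cornerMap he f) (cornerMap he g) := by
  intro y
  constructor
  · intro hy
    obtain ⟨x, hx⟩ := (h y.1).1 (congrArg Subtype.val hy)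
    exact ⟨cornerProj he x, Subtype.ext ((map_smul f e x).trans (by rw [hx, y.2]))⟩
  · rintro ⟨x, rfl⟩
    exact Subtype.ext ((h (f x.1)).2 ⟨x.1, rfl⟩)

theorem extClosed_cornerProjective (he : e * e = e) :
    ExtClosed (A := A) (fun M _ _ => Module.Projective (Corner e he) (CornerMod e he M)) where
  zero M _ _ hM := by
    have : Subsingleton (CornerMod e he M) := ⟨fun x y => Subtype.ext (hM.elim _ _)⟩
    infer_instance
  ext N M Q _ _ _ _ _ _ f g hf hg hfg hN hQ :=
    projective_of_ext (cornerMap he f) (cornerMap he g) (cornerMap_injective hf)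
      (cornerMap_surjective hg) (cornerMap_exact hfg)

theorem corner_projective_of_equiv (f : M ≃ₗ[A] N)
    [h : Module.Projective (Corner e he) (CornerMod e he M)] :
    Module.Projective (Corner e he) (CornerMod e he N) :=
  (extClosed_cornerProjective he).of_equiv f h

/-- If `eA` is projective over `eAe`, then so is `eP` for every projective `P`. -/
theorem corner_projective [hA : Module.Projective (Corner e he) (CornerMod e he A)]
    [Module.Projective A M] : Module.Projective (Corner e he) (CornerMod e he M) := by
  have hfree : ∀ ι : Type, Module.Projective (Corner e he) (CornerMod e he (ι →₀ A)) := by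
    intro ι
    let i : CornerMod e he (ι →₀ A) →ₗ[Corner e he] (ι →₀ CornerMod e he A) :=
      { toFun := fun x => Finsupp.mapRange (cornerProj he) (Subtype.ext (smul_zero e)) x.1
        map_add' := fun x y => Finsupp.ext fun j => by
          exact Subtype.ext (smul_add e (x.1 j) (y.1 j))
        map_smul' := fun c x => Finsupp.ext fun j => by
          refine Subtype.ext ?_
          change e * (c.1 * x.1 j) = c.1 * (e * x.1 j)
          rw [← mul_assoc, c.2.1, ← mul_assoc, c.2.2] }
    let s : (ι →₀ CornerMod e he A) →ₗ[Corner e he] CornerMod e he (ι →₀ A) :=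
      Finsupp.lsum ℕ fun j => cornerMap he (Finsupp.lsingle j)
    have hs : ∀ j, (cornerMap he (Finsupp.lapply j)).comp s = Finsupp.lapply j := by
      intro j
      refine Finsupp.lhom_ext fun l b => ?_
      rw [LinearMap.comp_apply, Finsupp.lsum_single]
      refine Subtype.ext ?_
      change (Finsupp.single l b.1) j = ((Finsupp.single l b) j).1
      by_cases h : l = j
      · subst h; simp
      · rw [Finsupp.single_eq_of_ne' h, Finsupp.single_eq_of_ne' h]; rfl
    classical
    have : Module.Projective (Corner e he) (ι →₀ CornerMod e he A) :=
      Module.Projective.of_equiv (finsuppLequivDFinsupp (Corner e he)).symm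
    refine Module.Projective.of_split i s
      (LinearMap.ext fun x => Subtype.ext (Finsupp.ext fun j => ?_))
    have h1 := congrArg Subtype.val (LinearMap.congr_fun (hs j) (i x))
    have h2 : ((s (i x)).1) j = e • x.1 j := h1
    rw [LinearMap.comp_apply, h2, ← Finsupp.smul_apply, x.2]
    rfl
  obtain ⟨σ, hσ⟩ := Module.projective_def.1 (inferInstance : Module.Projective A M)
  have := hfree M
  exact Module.Projective.of_split (cornerMap he σ)
    (cornerMap he (Finsupp.linearCombination A id)) (LinearMap.ext fun x => Subtype.ext (hσ x.1))

theorem corner_finiteDimensional (k : Type) [Field k] [Algebra k A] [FiniteDimensional k A]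
    (he : e * e = e) : FiniteDimensional k (Corner e he) := by
  let f : Corner e he →ₗ[k] A :=
    { toFun := Subtype.val, map_add' := fun _ _ => rfl, map_smul' := fun _ _ => rfl }
  exact FiniteDimensional.of_injective f Subtype.val_injective

theorem cornerMod_finite (k : Type) [Field k] [Algebra k A] [FiniteDimensional k A]
    (he : e * e = e) [Module.Finite A M] :
    Module.Finite (Corner e he) (CornerMod e he M) := by
  let _ : Module k M := Module.compHom M (algebraMap k A)
  have : IsScalarTower k A M := IsScalarTower.of_algebraMap_smul fun _ _ => rfl
  have : Module.Finite k M := Module.Finite.trans A M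
  let _ : Module k (CornerMod e he M) := Module.compHom _ (algebraMap k (Corner e he))
  have : IsScalarTower k (Corner e he) (CornerMod e he M) :=
    IsScalarTower.of_algebraMap_smul fun _ _ => rfl
  let f : CornerMod e he M →ₗ[k] M :=
    { toFun := Subtype.val
      map_add' := fun _ _ => rfl
      map_smul' := fun c x => by
        have h1 : (c • x).1 = (c • (1 : Corner e he)).1 • x.1 := by
          rw [← Algebra.algebraMap_eq_smul_one]; rfl
        have h2 : (c • (1 : Corner e he)).1 = c • e := rfl
        rw [h1, h2, smul_assoc, x.2, RingHom.id_apply] }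
  have : Module.Finite k (CornerMod e he M) :=
    FiniteDimensional.of_injective f Subtype.val_injective
  exact Module.Finite.of_restrictScalars_finite k (Corner e he) _

/-- If `eAe` is local and `eA` is projective over it, then `eM` is projective for every `M` of finite
projective dimension. -/
theorem corner_projective_of_projDim {k : Type} [Field k] [Algebra k A] {J : Ideal (Corner e he)}
    [Nontrivial (Corner e he)] (hJ : IsKLocal k J)
    [hA : Module.Projective (Corner e he) (CornerMod e he A)] {d : ℕ}
    {M : Type} [AddCommGroup M] [Module A M] (hM : ProjDimLE A d M) :
    Module.Projective (Corner e he) (CornerMod e he M) := by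
  induction d generalizing M with
  | zero =>
    have := projDim_zero.1 hM
    exact corner_projective
  | succ d ih =>
    obtain ⟨P, _, _, f, hP, hf, hd⟩ := projDim_succ.1 hM
    have := ih hd
    have : Module.Projective (Corner e he) (CornerMod e he P) := corner_projective
    exact hJ.projective_of_exact (cornerMap he (LinearMap.ker f).subtype) (cornerMap he f)
      (cornerMap_injective Subtype.val_injective) (cornerMap_surjective hf)
      (cornerMap_exact (LinearMap.exact_subtype_ker_map f))

end CornerFunctor

/-! ### Corners at primitive idempotents -/

section Primitive

variable {A : Type} [Ring A] {n : ℕ} {e : Fin n → A}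

theorem mem_stdIdeal (hidem : ∀ i, e i * e i = e i) {i : Fin n} {x : A} :
    x ∈ stdIdeal A e i ↔ x * e i = x := by
  rw [Submodule.mem_span_singleton]
  constructor
  · rintro ⟨a, rfl⟩
    rw [smul_eq_mul, mul_assoc, hidem]
  · intro h
    exact ⟨x, h⟩

theorem corner_nontrivial (hidem : ∀ i, e i * e i = e i) {i : Fin n}
    (hprim : IsIndecModule A ↥(stdIdeal A e i)) : Nontrivial (Corner (e i) (hidem i)) := by
  refine ⟨⟨1, 0, fun h => ?_⟩⟩
  have he0 : e i = 0 := congrArg Subtype.val h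
  obtain ⟨x, hx⟩ := (@exists_ne _ hprim.1 (0 : ↥(stdIdeal A e i)))
  refine hx (Subtype.ext ?_)
  have := (mem_stdIdeal hidem).1 x.2
  rw [he0, mul_zero] at this
  exact this.symm

/-- `e_i A e_i` has no nontrivial idempotents, since they split `Ae_i`. -/
theorem corner_idempotent (hidem : ∀ i, e i * e i = e i) {i : Fin n}
    (hprim : IsIndecModule A ↥(stdIdeal A e i)) (f : Corner (e i) (hidem i)) (hf : f * f = f) :
    f = 0 ∨ f = 1 := by
  have hff : f.1 * f.1 = f.1 := congrArg Subtype.val hf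
  -- right multiplication by `f` on `Ae_i`
  let ρ : Module.End A ↥(stdIdeal A e i) :=
    { toFun := fun x => ⟨x.1 * f.1, (mem_stdIdeal hidem).2 (by rw [mul_assoc, f.2.2])⟩
      map_add' := fun x y => Subtype.ext (add_mul _ _ _)
      map_smul' := fun a x => Subtype.ext (mul_assoc _ _ _) }
  have hρ : IsIdempotentElem ρ :=
    LinearMap.ext fun x => Subtype.ext (by
      change x.1 * f.1 * f.1 = x.1 * f.1
      rw [mul_assoc, hff])
  let E : ↥(stdIdeal A e i) := ⟨e i, (mem_stdIdeal hidem).2 (hidem i)⟩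
  rcases hprim.2 _ _ (LinearMap.IsIdempotentElem.isCompl hρ) with h | h
  · left
    have h1 : ρ E ∈ LinearMap.range ρ := ⟨E, rfl⟩
    rw [h, Submodule.mem_bot] at h1
    have h2 : e i * f.1 = 0 := congrArg Subtype.val h1
    rw [f.2.1] at h2
    exact Subtype.ext h2
  · right
    have h1 : E - ρ E ∈ LinearMap.ker ρ := by
      rw [LinearMap.mem_ker, map_sub, ← Module.End.mul_apply, hρ.eq, sub_self]
    rw [h, Submodule.mem_bot, sub_eq_zero] at h1
    have h2 : e i = e i * f.1 := congrArg Subtype.val h1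
    rw [f.2.1] at h2
    exact Subtype.ext h2.symm

theorem corner_isKLocal {k : Type} [Field k] [IsAlgClosed k] [Algebra k A]
    [FiniteDimensional k A] (hidem : ∀ i, e i * e i = e i) {i : Fin n}
    (hprim : IsIndecModule A ↥(stdIdeal A e i)) :
    IsKLocal k (Ideal.jacobson (⊥ : Ideal (Corner (e i) (hidem i)))) := by
  have := corner_nontrivial hidem hprim
  have := corner_finiteDimensional k (hidem i)
  exact isKLocal_jacobson (corner_idempotent hidem hprim)

end Primitive

/-! ### Directed algebras -/

/-- The standing hypotheses: a complete set of orthogonal idempotents with respect to which `A`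
is directed. -/
structure DirSys {A : Type} [Ring A] {n : ℕ} (e : Fin n → A) : Prop where
  idem : ∀ i, e i * e i = e i
  orth : ∀ i j, i ≠ j → e i * e j = 0
  sum : ∑ i, e i = 1
  dir : IsDirectedAlgebra A e

namespace DirSys

variable {A : Type} [Ring A] {n : ℕ} {e : Fin n → A}
variable {M : Type} [AddCommGroup M] [Module A M]

theorem sum_smul (h : DirSys e) (x : M) : ∑ i, e i • x = x := by
  rw [← Finset.sum_smul, h.sum, one_smul]

/-- For `x ∈ Ae_i`, lying in the trace submodule is the vanishing of the component `e_i x`. -/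
theorem mem_stdTrace (h : DirSys e) {i : Fin n} {x : A} (hx : x * e i = x) :
    x ∈ stdTrace A e i ↔ e i * x = 0 := by
  constructor
  · intro hm
    -- the vanishing is propagated along the `A`-span in the stable form `e_i A x = 0`
    suffices hs : ∀ a, e i * (a * x) = 0 by simpa using hs 1
    clear hx
    induction hm using Submodule.span_induction with
    | mem x hx =>
      obtain ⟨l, hl, b, rfl⟩ := hx
      intro a
      rw [← mul_assoc, ← mul_assoc, ← mul_assoc, h.dir l i hl, zero_mul, zero_mul]
    | zero => intro a; rw [mul_zero, mul_zero]
    | add x y _ _ hx hy => intro a; rw [mul_add, mul_add, hx, hy, add_zero]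
    | smul b x _ hx => intro a; rw [smul_eq_mul, ← mul_assoc a, hx]
  · intro h0
    have hs : x = ∑ l, e l * x := by
      rw [← Finset.sum_mul, h.sum, one_mul]
    rw [hs]
    refine Submodule.sum_mem _ fun l _ => ?_
    rcases lt_trichotomy l i with hl | rfl | hl
    · have := h.dir i l hl x
      rw [mul_assoc, hx] at this
      rw [this]; exact zero_mem _
    · rw [h0]; exact zero_mem _
    · exact Submodule.subset_span ⟨l, hl, x, by rw [mul_assoc, hx]⟩

theorem stdMod_mk_eq (h : DirSys e) {i : Fin n} {x y : ↥(stdIdeal A e i)}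
    (hxy : e i * x.1 = e i * y.1) :
    (Submodule.Quotient.mk x : StdMod A e i) = Submodule.Quotient.mk y := by
  rw [Submodule.Quotient.eq, Submodule.mem_comap]
  refine (h.mem_stdTrace ((mem_stdIdeal h.idem).1 (x - y).2)).2 ?_
  change e i * (x.1 - y.1) = 0
  rw [mul_sub, hxy, sub_self]

/-- The bijection `e_i A e_i → Δ_i` induced by the inclusion in `Ae_i`. -/
def toStd (h : DirSys e) (i : Fin n) (c : Corner (e i) (h.idem i)) : StdMod A e i :=
  Submodule.Quotient.mk ⟨c.1, (mem_stdIdeal h.idem).2 c.2.2⟩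

theorem toStd_add (h : DirSys e) (i : Fin n) (c d : Corner (e i) (h.idem i)) :
    h.toStd i (c + d) = h.toStd i c + h.toStd i d := rfl

theorem toStd_eq_zero (h : DirSys e) {i : Fin n} {c : Corner (e i) (h.idem i)} :
    h.toStd i c = 0 ↔ c = 0 := by
  unfold toStd
  rw [Submodule.Quotient.mk_eq_zero, Submodule.mem_comap]
  change c.1 ∈ _ ↔ _
  rw [h.mem_stdTrace c.2.2, c.2.1]
  exact ⟨fun hc => Subtype.ext hc, fun hc => congrArg Subtype.val hc⟩

theorem toStd_surjective (h : DirSys e) (i : Fin n) : Function.Surjective (h.toStd i) := by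
  intro y
  obtain ⟨x, rfl⟩ := Submodule.Quotient.mk_surjective _ y
  have hx := (mem_stdIdeal h.idem).1 x.2
  refine ⟨⟨e i * x.1, by rw [← mul_assoc, h.idem], by rw [mul_assoc, hx]⟩, ?_⟩
  refine h.stdMod_mk_eq ?_
  rw [← mul_assoc, h.idem]

/-- `A` acts on `Δ_i ≅ e_i A e_i` through the compression `a ↦ e_i a e_i`. -/
theorem toStd_smul (h : DirSys e) (i : Fin n) (a : A) (c : Corner (e i) (h.idem i)) :
    a • h.toStd i c = h.toStd i (cornEl (h.idem i) a * c) := by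
  refine h.stdMod_mk_eq ?_
  change e i * (a * c.1) = e i * (e i * a * e i * c.1)
  rw [mul_assoc (e i * a), c.2.1, ← mul_assoc, ← mul_assoc, ← mul_assoc, h.idem]

/-- The corners of the standard modules: `e_i Δ_i` is free of rank one, `e_j Δ_i = 0` otherwise. -/
theorem stdMod_corner_projective (h : DirSys e) (i j : Fin n) :
    Module.Projective (Corner (e j) (h.idem j)) (CornerMod (e j) (h.idem j) (StdMod A e i)) := by
  by_cases hij : j = i
  · subst hij
    have hfix : ∀ c : Corner (e j) (h.idem j), e j • h.toStd j c = h.toStd j c := by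
      intro c
      rw [h.toStd_smul]
      congr 1
      refine Subtype.ext ?_
      change e j * e j * e j * c.1 = c.1
      rw [h.idem, h.idem, c.2.1]
    let f : Corner (e j) (h.idem j) →ₗ[Corner (e j) (h.idem j)]
        CornerMod (e j) (h.idem j) (StdMod A e j) :=
      { toFun := fun c => ⟨h.toStd j c, hfix c⟩
        map_add' := fun c d => rfl
        map_smul' := fun c d => rfl }
    refine Module.Projective.of_equiv (LinearEquiv.ofBijective f ⟨?_, fun y => ?_⟩)
    · rw [← LinearMap.ker_eq_bot, eq_bot_iff]
      intro c hc
      exact h.toStd_eq_zero.1 (congrArg Subtype.val hc)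
    · obtain ⟨c, hc⟩ := h.toStd_surjective j y.1
      exact ⟨c, Subtype.ext hc⟩
  · have hz : ∀ y : CornerMod (e j) (h.idem j) (StdMod A e i), y = 0 := by
      intro y
      obtain ⟨c, hc⟩ := h.toStd_surjective i y.1
      refine Subtype.ext ?_
      rw [← y.2, ← hc, h.toStd_smul]
      refine h.toStd_eq_zero.2 (Subtype.ext ?_)
      change e i * e j * e i * c.1 = 0
      rw [h.orth i j (Ne.symm hij), zero_mul, zero_mul]
    have : Subsingleton (CornerMod (e j) (h.idem j) (StdMod A e i)) :=
      ⟨fun x y => (hz x).trans (hz y).symm⟩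
    infer_instance

theorem corner_projective_of_hasStd (h : DirSys e) (hM : HasStdFiltration A e M) (j : Fin n) :
    Module.Projective (Corner (e j) (h.idem j)) (CornerMod (e j) (h.idem j) M) :=
  (extClosed_cornerProjective (h.idem j)).of_hasStd (fun i => h.stdMod_corner_projective i j) hM

/-- The submodule `⊕_{j ≥ m} e_j M` of `M`, described by the vanishing of the other components. -/
def upper (h : DirSys e) (M : Type) [AddCommGroup M] [Module A M] (m : ℕ) :
    Submodule A M where
  carrier := {x | ∀ j : Fin n, j.1 < m → e j • x = 0}
  add_mem' hx hy j hj := by rw [smul_add, hx j hj, hy j hj, add_zero]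
  zero_mem' j _ := smul_zero _
  smul_mem' a x hx j hj := by
    rw [← h.sum_smul x, Finset.smul_sum, Finset.smul_sum]
    refine Finset.sum_eq_zero fun l _ => ?_
    by_cases hlj : l ≤ j
    · rw [hx l (lt_of_le_of_lt hlj hj), smul_zero, smul_zero]
    · rw [smul_smul, smul_smul, h.dir l j (not_le.1 hlj), zero_smul]

/-- On `⊕_{j ≥ i} e_j M`, the component in `e_i M` of `a x` depends only on that of `x`, through the
action of `e_i a e_i`. -/
theorem cornerProj_smul (h : DirSys e) (i : Fin n) (a : A) {x : M} (hx : x ∈ h.upper M i.1) :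
    cornerProj (h.idem i) (a • x) = cornEl (h.idem i) a • cornerProj (h.idem i) x := by
  refine Subtype.ext ?_
  change e i • a • x = (e i * a * e i) • e i • x
  rw [smul_smul _ (e i), mul_assoc _ (e i), h.idem, mul_smul, mul_smul]
  conv_lhs => rw [← h.sum_smul x, Finset.smul_sum, Finset.smul_sum]
  refine Finset.sum_eq_single i (fun l _ hl => ?_) (by simp)
  rcases lt_or_gt_of_ne hl with hl | hl
  · rw [hx l hl, smul_zero, smul_zero]
  · rw [smul_smul, smul_smul, h.dir l i hl, zero_smul]

/-- If every `e_j M` is free of finite rank over `e_j A e_j`, then `⊕_{j ≥ m} e_j M` is an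
iterated extension of the `Δ_j` with `j ≥ m`: the quotient of two consecutive such submodules is
`e_m M`, a finite direct power of `Δ_m`. -/
theorem upper_mem (h : DirSys e) {C : ∀ (M : Type) [AddCommGroup M] [Module A M], Prop}
    (hC : ExtClosed C)
    (hM : ∀ j, ∃ r : ℕ, Nonempty (Module.Basis (Fin r) (Corner (e j) (h.idem j))
      (CornerMod (e j) (h.idem j) M)))
    {m : ℕ} (hm : m ≤ n) (hΔ : ∀ j : Fin n, m ≤ j.1 → C (StdMod A e j)) : C ↥(h.upper M m) := by
  revert hΔ
  induction hm using Nat.decreasingInduction with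
  | self =>
    intro _
    refine hC.zero _ ⟨fun x y => Subtype.ext ?_⟩
    have hz : ∀ x : ↥(h.upper M n), x.1 = 0 := fun x => by
      rw [← h.sum_smul x.1]
      exact Finset.sum_eq_zero fun j _ => x.2 j j.2
    rw [hz x, hz y]
  | of_succ m hmn ih =>
    intro hΔ
    have ih := ih fun j hj => hΔ j (by omega)
    let i : Fin n := ⟨m, hmn⟩
    obtain ⟨r, ⟨b⟩⟩ := hM i
    let g : ↥(h.upper M m) →ₗ[A] (Fin r → StdMod A e i) :=
      { toFun := fun x t => h.toStd i (b.repr (cornerProj (h.idem i) x.1) t)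
        map_add' := fun x y => funext fun t => by
          change h.toStd i (b.repr (cornerProj (h.idem i) (x.1 + y.1)) t) = _
          rw [cornerProj_add, map_add]
          rfl
        map_smul' := fun a x => funext fun t => by
          change h.toStd i (b.repr (cornerProj (h.idem i) (a • x.1)) t) = _
          rw [h.cornerProj_smul i a x.2, map_smul, Finsupp.smul_apply, smul_eq_mul,
            ← h.toStd_smul]
          rfl }
    have hle : h.upper M (m + 1) ≤ h.upper M m := fun x hx j hj => hx j (by omega)
    refine hC.ext _ _ _ (Submodule.inclusion hle) g (Submodule.inclusion_injective _) ?_ ?_ ih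
      (hC.pi (hΔ i le_rfl) r)
    · intro y
      choose c hc using fun t => h.toStd_surjective i (y t)
      let x := b.equivFun.symm c
      have hx : x.1 ∈ h.upper M m := fun j hj => by
        rw [← x.2, smul_smul, h.orth j i (Fin.ne_of_lt hj), zero_smul]
      refine ⟨⟨x.1, hx⟩, funext fun t => ?_⟩
      change h.toStd i (b.repr (cornerProj (h.idem i) x.1) t) = y t
      rw [cornerProj_val, ← hc t, ← b.equivFun_apply, LinearEquiv.apply_symm_apply]
    · intro x
      constructor
      · intro hx
        have h1 : cornerProj (h.idem i) x.1 = 0 := by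
          rw [← b.repr.map_eq_zero_iff]
          exact Finsupp.ext fun t => h.toStd_eq_zero.1 (congrFun hx t)
        have h2 : e i • x.1 = 0 := congrArg Subtype.val h1
        refine ⟨⟨x.1, fun j hj => ?_⟩, rfl⟩
        rcases Nat.lt_succ_iff_lt_or_eq.1 hj with hj | hj
        · exact x.2 j hj
        · have : j = i := Fin.ext hj
          rw [this, h2]
      · rintro ⟨y, rfl⟩
        refine funext fun t => h.toStd_eq_zero.2 ?_
        have h1 : cornerProj (h.idem i) y.1 = 0 := Subtype.ext (y.2 i (Nat.lt_succ_self m))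
        change b.repr (cornerProj (h.idem i) y.1) t = 0
        rw [h1, map_zero]
        rfl

end DirSys

end DirStrat

open DirStrat

/-- If the basic finite-dimensional algebra `A` is directed and standardly
stratified with respect to the index order, then a finitely generated left `A`-module lies in
`F(Δ)` if and only if it has finite projective dimension. -/
theorem statement6
    (k : Type) [Field k] [IsAlgClosed k]
    (A : Type) [Ring A] [Algebra k A] [FiniteDimensional k A]
    {n : ℕ} (e : Fin n → A)
    (hidem : ∀ i, e i * e i = e i)
    (horth : ∀ i j, i ≠ j → e i * e j = 0)
    (hsum : ∑ i, e i = 1)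
    (hprim : ∀ i, IsIndecModule A ↥(stdIdeal A e i))
    (hbasic : ∀ i j, i ≠ j → IsEmpty (↥(stdIdeal A e i) ≃ₗ[A] ↥(stdIdeal A e j)))
    (hdir : IsDirectedAlgebra A e)
    (hss : HasStdFiltration A e A) :
    ∀ (M : Type) [AddCommGroup M] [Module A M], Module.Finite A M →
      (HasStdFiltration A e M ↔ ∃ d : ℕ, ProjDimLE A d M) := by
  have h : DirSys e := ⟨hidem, horth, hsum, hdir⟩
  have hnt := fun i => corner_nontrivial hidem (hprim i)
  have hfd := fun i => corner_finiteDimensional k (hidem i)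
  have hloc := fun i => corner_isKLocal (k := k) hidem (hprim i)
  have hA := fun i => h.corner_projective_of_hasStd hss i
  -- finite projective dimension forces every `e_j M` to be free
  have hbasis : ∀ (M : Type) [AddCommGroup M] [Module A M], Module.Finite A M →
      (∃ d : ℕ, ProjDimLE A d M) → ∀ j, ∃ r : ℕ, Nonempty (Module.Basis (Fin r)
        (Corner (e j) (hidem j)) (CornerMod (e j) (hidem j) M)) := by
    rintro M _ _ hM ⟨d, hd⟩ j
    have := corner_projective_of_projDim (hloc j) hd
    have := cornerMod_finite (M := M) k (hidem j)
    exact (hloc j).exists_basis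
  intro M _ _ hM
  constructor
  · -- it suffices that each `Δ_i` has finite projective dimension, by downward induction on `i`
    refine extClosed_projDim.of_hasStd fun i => ?_
    induction i using WellFoundedGT.induction with
    | ind i ih =>
      have hproj : Module.Projective A ↥(stdIdeal A e i) := by
        refine Module.Projective.of_split (stdIdeal A e i).subtype
          ((LinearMap.toSpanSingleton A A (e i)).codRestrict _ fun a =>
            (mem_stdIdeal hidem).2 ?_) (LinearMap.ext fun x => Subtype.ext ?_)
        · rw [LinearMap.toSpanSingleton_apply, smul_eq_mul, mul_assoc, hidem]
        · exact (mem_stdIdeal hidem).1 x.2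
      have hfin : Module.Finite A ↥(stdIdeal A e i) := inferInstance
      obtain ⟨d, hd⟩ := h.upper_mem extClosed_projDim
        (hbasis _ hfin ⟨0, projDim_zero.2 hproj⟩) (Nat.succ_le_of_lt i.2)
        (fun j hj => ih j hj)
      refine ⟨d + 1, projDim_succ.2 ⟨_, _, _, Submodule.mkQ _, hproj,
        Submodule.mkQ_surjective _, ?_⟩⟩
      -- the kernel of `Ae_i → Δ_i` is `⊕_{j > i} e_j A e_i`, filtered by the `Δ_j` with `j > i`
      have hker : Submodule.comap (stdIdeal A e i).subtype (stdTrace A e i)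
          = h.upper ↥(stdIdeal A e i) (i.1 + 1) := by
        ext x
        have hx := (mem_stdIdeal hidem).1 x.2
        rw [Submodule.mem_comap]
        refine (h.mem_stdTrace hx).trans ⟨fun h0 j hj => Subtype.ext ?_, fun h0 => ?_⟩
        · change e j * x.1 = 0
          rcases (Nat.lt_succ_iff_lt_or_eq.1 hj) with hj | hj
          · have := hdir i j hj x.1
            rwa [mul_assoc, hx] at this
          · rwa [Fin.ext hj]
        · exact congrArg Subtype.val (h0 i (Nat.lt_succ_self _))
      rw [Submodule.ker_mkQ, hker]
      exact hd
  · intro hd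
    have hC := extClosed_hasStd e
    have hΔ : ∀ j : Fin n, HasStdFiltration A e (StdMod A e j) := fun j =>
      hasStd_snoc (N := PUnit) 0 LinearMap.id (fun _ _ _ => rfl) Function.surjective_id
        (fun x => ⟨fun hx => ⟨0, hx.symm⟩, by rintro ⟨y, rfl⟩; rfl⟩) (hC.zero _ inferInstance)
    have h1 := h.upper_mem hC (hbasis M hM hd) (Nat.zero_le n) fun j _ => hΔ j
    have htop : h.upper M 0 = ⊤ := eq_top_iff.2 fun x _ j hj => absurd hj (Nat.not_lt_zero _)
    rw [htop] at h1
    exact hC.of_equiv Submodule.topEquiv h1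
end

section
/- Suppose A is directed (e_j A e_i = 0 whenever j < i) and standardly stratified with respect to the index order (the left regular module A belongs to F(Δ)). Then a finitely generated left A-module M has finite projective dimension if and only if, for every i ∈ {1,…,n}, the left e_iAe_i-module e_iM is free (where the zero module counts as free). -/
/-!
Write `R_i = e_i A e_i`. The corner functor `M ↦ e_i M` from `A`-modules to `R_i`-modules is exact,
and three facts about it carry the theorem.

* `R_i` is a local Artinian ring: by Fitting's lemma for right multiplications on the
  indecomposable module `A e_i`, every element of `R_i` is nilpotent or a unit
  (`corner_nilpotent_or_isUnit`, `corner_local`).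
* Over such a ring every projective module is free (`free_of_projective_of_local`), and the
  cokernel of an injection between projective modules is projective
  (`projective_of_exact_of_local`). For the latter, take `s ≠ 0` with `s * rad R = 0`. It kills
  `rad R • P`, whereas an element of a free module `N` killed by `s` lies in `rad R • N`; so an
  injection `N → P` stays injective modulo the radical, where it splits, and the splitting lifts.
* `e_i A` is projective over `R_i` (`projective_cornerMod_self`): directedness gives
  `e_i Δ_i ≅ R_i` and `e_i Δ_j = 0` for `j ≠ i`, so the standard filtration of `A` becomes a
  filtration of `e_i A` with projective quotients. Hence the corner functor preserves projectives.

If `M` has finite projective dimension, the corner functor turns a finite projective resolution of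
`M` into one of `e_i M`, and `e_i M` is projective, hence free.

Conversely, let every `e_j M` be free with basis `B_j`. The module `P = ⨁_j ⨁_{b ∈ B_j} A e_j` maps
onto `M`; let `K` be the kernel. Each `e_j K` is the kernel of an epimorphism of projective
modules, so it is free. By directedness, if `e_j M = 0` for all `j < i`, then `e_i P → e_i M` is
injective and `e_i K = 0` (`exists_projective_cover`). Passing to the kernel thus makes at least
one further initial index vanish, so after `n` steps the syzygy is zero and the projective
dimension of `M` is at most `n` (`projDimLE_of_free`).
-/

set_option linter.unusedVariables false
set_option maxHeartbeats 1000000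

/-! ### Local rings with nilpotent radical -/

section LocalArtinian

variable {R : Type} [Ring R]

/-- Nakayama's lemma for the nilpotent ideal `rad R`; no finiteness of `M` is needed. -/
lemma eq_bot_of_le_rad_smul [IsSemiprimaryRing R] {M : Type} [AddCommGroup M] [Module R M]
    {N : Submodule R M} (h : N ≤ Ring.jacobson R • N) : N = ⊥ := by
  obtain ⟨m, hm⟩ := IsSemiprimaryRing.isNilpotent (R := R)
  have key : ∀ t : ℕ, N ≤ (Ring.jacobson R ^ t) • N := by
    intro t
    induction t with
    | zero => rw [Submodule.pow_zero, Ideal.one_eq_top, Submodule.top_smul]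
    | succ t ih =>
      rw [Submodule.pow_succ, Submodule.mul_smul]
      exact ih.trans (Submodule.smul_mono le_rfl h)
  have := key m
  rw [hm, Ideal.zero_eq_bot, Submodule.bot_smul] at this
  exact le_bot_iff.mp this

lemma eq_top_of_sup_rad_smul [IsSemiprimaryRing R] {M : Type} [AddCommGroup M] [Module R M]
    {N : Submodule R M} (h : N ⊔ Ring.jacobson R • (⊤ : Submodule R M) = ⊤) : N = ⊤ := by
  have : (⊤ : Submodule R (M ⧸ N)) = ⊥ := by
    apply eq_bot_of_le_rad_smul
    have h2 := congrArg (Submodule.map N.mkQ) h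
    rw [Submodule.map_sup, Submodule.map_smul'', Submodule.mkQ_map_self, bot_sup_eq, Submodule.map_top,
      Submodule.range_mkQ] at h2
    exact h2.ge
  rw [eq_top_iff]
  intro x _
  have hx : N.mkQ x ∈ (⊤ : Submodule R (M ⧸ N)) := trivial
  rw [this] at hx
  simpa using hx

/-- Over a local ring with nilpotent radical every projective module is free, of any rank:
a lift of a basis of `P ⧸ rad R • P` over the division ring `R ⧸ rad R` is a basis of `P`. -/
lemma free_of_projective_of_local [IsSemiprimaryRing R] [Nontrivial R]
    (hloc : ∀ x : R, IsUnit x ∨ x ∈ Ring.jacobson R)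
    (P : Type) [AddCommGroup P] [Module R P] [Module.Projective R P] : Module.Free R P := by
  have hnt : Nontrivial (R ⧸ Ring.jacobson R) :=
    Ideal.Quotient.nontrivial_iff.mpr (Ring.jacobson_lt_top R).ne
  let _ : DivisionRing (R ⧸ Ring.jacobson R) := DivisionRing.ofIsUnitOrEqZero (by
    intro a
    obtain ⟨x, rfl⟩ := Ideal.Quotient.mk_surjective a
    rcases hloc x with h | h
    · exact Or.inl (h.map _)
    · exact Or.inr (Ideal.Quotient.eq_zero_iff_mem.mpr h))
  let V := P ⧸ (Ring.jacobson R • (⊤ : Submodule R P))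
  let b := Module.Basis.ofVectorSpace (R ⧸ Ring.jacobson R) V
  set ι := Module.Basis.ofVectorSpaceIndex (R ⧸ Ring.jacobson R) V
  choose v hv using fun i : ι => Submodule.mkQ_surjective _ (b i)
  let φ : (ι →₀ R) →ₗ[R] P := Finsupp.linearCombination R v
  have hmk : ∀ c : ι →₀ R, (Submodule.Quotient.mk (φ c) : V) =
      c.sum fun i r => Ideal.Quotient.mk (Ring.jacobson R) r • b i := by
    intro c
    have : (Submodule.Quotient.mk (φ c) : V) = Submodule.mkQ _ (φ c) := rfl
    rw [this, Finsupp.linearCombination_apply, map_finsuppSum]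
    refine Finsupp.sum_congr fun i _ => ?_
    rw [← hv i]
    rfl
  have hsurj : LinearMap.range φ = ⊤ := by
    apply eq_top_of_sup_rad_smul
    rw [eq_top_iff]
    intro x _
    have hx : (Submodule.Quotient.mk x : V) ∈ Submodule.span (R ⧸ Ring.jacobson R) (Set.range b) := by
      rw [b.span_eq]; trivial
    obtain ⟨c, hc⟩ := (Finsupp.mem_span_range_iff_exists_finsupp).mp hx
    choose r hr using fun i : ι => Ideal.Quotient.mk_surjective (c i)
    let x' : P := ∑ i ∈ c.support, r i • v i
    have hx' : (Submodule.Quotient.mk x' : V) = Submodule.Quotient.mk x := by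
      rw [← hc]
      have : (Submodule.Quotient.mk x' : V) = Submodule.mkQ _ x' := rfl
      rw [this, map_sum, Finsupp.sum]
      refine Finset.sum_congr rfl fun i _ => ?_
      rw [← hr i, ← hv i]
      rfl
    have h1 : x - x' ∈ Ring.jacobson R • (⊤ : Submodule R P) :=
      (Submodule.Quotient.eq _).mp hx'.symm
    have h2 : x' ∈ LinearMap.range φ := by
      refine Submodule.sum_mem _ fun i _ => Submodule.smul_mem _ _ ⟨Finsupp.single i 1, ?_⟩
      simp [φ]
    have := Submodule.add_mem_sup h2 h1
    rwa [add_sub_cancel] at this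
  obtain ⟨s, hs⟩ := Module.projective_lifting_property φ LinearMap.id
    (LinearMap.range_eq_top.mp hsurj)
  have hker : LinearMap.ker φ ≤ Ring.jacobson R • (⊤ : Submodule R (ι →₀ R)) := by
    intro c hc
    have h0 := hmk c
    rw [LinearMap.mem_ker.mp hc] at h0
    have h1 : c.mapRange (Ideal.Quotient.mk (Ring.jacobson R)) (map_zero _) = 0 := by
      refine (linearIndependent_iff.mp b.linearIndependent) _ ?_
      rw [Finsupp.linearCombination_apply, Finsupp.sum_mapRange_index
        (h := fun i a => a • b i) (fun i => zero_smul _ (b i))]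
      exact h0.symm
    rw [← Finsupp.sum_single c]
    refine Submodule.sum_mem _ fun i _ => ?_
    have h2 : c i ∈ Ring.jacobson R := by
      have := DFunLike.congr_fun h1 i
      exact Ideal.Quotient.eq_zero_iff_mem.mp (by simpa using this)
    have h3 : Finsupp.single i (c i) = c i • Finsupp.single i (1 : R) := by simp
    rw [h3]
    exact Submodule.smul_mem_smul h2 trivial
  -- `id - s ∘ φ` is a projection of the free module onto `ker φ`
  have hbot : LinearMap.ker φ = ⊥ := by
    apply eq_bot_of_le_rad_smul
    intro c hc
    let r : (ι →₀ R) →ₗ[R] (ι →₀ R) := LinearMap.id - s ∘ₗ φ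
    have hr : ∀ x, φ (r x) = 0 := by
      intro x
      have := LinearMap.congr_fun hs (φ x)
      simp only [LinearMap.comp_apply, LinearMap.id_apply] at this
      simp [r, this]
    have hrc : r c = c := by
      simp [r, LinearMap.mem_ker.mp hc]
    have h1 : r c ∈ Submodule.map r (Ring.jacobson R • (⊤ : Submodule R (ι →₀ R))) :=
      Submodule.mem_map_of_mem (hker hc)
    rw [Submodule.map_smul'', hrc] at h1
    refine Submodule.smul_mono le_rfl ?_ h1
    rintro _ ⟨x, -, rfl⟩
    exact hr x
  exact Module.Free.of_equiv (LinearEquiv.ofBijective φ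
    ⟨LinearMap.ker_eq_bot.mp hbot, LinearMap.range_eq_top.mp hsurj⟩)

/-- The left annihilator `{s | s * rad R = 0}` of `rad R` is nonzero. -/
lemma exists_mul_rad_eq_zero [IsSemiprimaryRing R] [Nontrivial R] :
    ∃ s : R, s ≠ 0 ∧ ∀ x ∈ Ring.jacobson R, s * x = 0 := by
  classical
  have hex : ∃ m, Ring.jacobson R ^ m = 0 := IsSemiprimaryRing.isNilpotent (R := R)
  have h0 : Nat.find hex ≠ 0 := by
    intro h
    have := Nat.find_spec hex
    rw [h, Submodule.pow_zero, Ideal.one_eq_top, Ideal.zero_eq_bot] at this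
    exact top_ne_bot this
  obtain ⟨m, hm⟩ := Nat.exists_eq_succ_of_ne_zero h0
  have hne : Ring.jacobson R ^ m ≠ ⊥ := Nat.find_min hex (by omega)
  obtain ⟨s, hs, hs0⟩ := Submodule.exists_mem_ne_zero_of_ne_bot hne
  refine ⟨s, hs0, fun x hx => ?_⟩
  have hz : Ring.jacobson R ^ (m + 1) = 0 := by
    have := Nat.find_spec hex
    rwa [hm] at this
  have := Ideal.mul_mem_mul hs hx
  rw [← Submodule.pow_succ, hz] at this
  exact this

/-- A local ring with nilpotent radical has finitistic dimension zero: a cokernel of an injection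
between projective modules is projective. -/
lemma projective_of_exact_of_local [IsSemiprimaryRing R] [Nontrivial R]
    (hloc : ∀ x : R, IsUnit x ∨ x ∈ Ring.jacobson R)
    {N P M : Type} [AddCommGroup N] [Module R N] [AddCommGroup P] [Module R P]
    [AddCommGroup M] [Module R M] [Module.Projective R N] [Module.Projective R P]
    (i : N →ₗ[R] P) (f : P →ₗ[R] M) (hi : Function.Injective i) (hex : Function.Exact i f)
    (hf : Function.Surjective f) : Module.Projective R M := by
  set J := Ring.jacobson R with hJ
  have := free_of_projective_of_local hloc N
  let b := Module.Free.chooseBasis R N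
  obtain ⟨s, hs0, hs⟩ := exists_mul_rad_eq_zero (R := R)
  -- `s` kills `J P`, while an element of the free module `N` killed by `s` lies in `J N`
  have hsP : ∀ p ∈ J • (⊤ : Submodule R P), s • p = 0 := by
    intro p hp
    induction hp using Submodule.smul_induction_on' with
    | smul r hr n hn => rw [smul_smul, hs r hr, zero_smul]
    | add x hx y hy h1 h2 => rw [smul_add, h1, h2, add_zero]
  have hsN : ∀ x : N, s • x = 0 → x ∈ J • (⊤ : Submodule R N) := by
    intro x hx
    rw [← b.linearCombination_repr x, Finsupp.linearCombination_apply]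
    refine Submodule.sum_mem _ fun j _ => Submodule.smul_mem_smul ?_ trivial
    refine (hloc _).resolve_left fun hu => hs0 ?_
    have h1 : s * b.repr x j = 0 := by
      have := congrArg (fun c => c j) (congrArg b.repr hx)
      simpa using this
    exact (hu.mul_left_eq_zero).mp h1
  have hle : J • (⊤ : Submodule R N) ≤ (J • (⊤ : Submodule R P)).comap i := by
    rw [← Submodule.map_le_iff_le_comap, Submodule.map_smul'']
    exact Submodule.smul_mono le_rfl le_top
  let ib := Submodule.mapQ (J • (⊤ : Submodule R N)) (J • (⊤ : Submodule R P)) i hle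
  have hib : Function.Injective ib := by
    rw [← LinearMap.ker_eq_bot, LinearMap.ker_eq_bot']
    intro x hx
    obtain ⟨x, rfl⟩ := Submodule.mkQ_surjective _ x
    have h1 : i x ∈ J • (⊤ : Submodule R P) := by
      simpa [ib] using hx
    have h2 : s • x = 0 := hi (by rw [map_smul, hsP _ h1, map_zero])
    simpa using hsN x h2
  have hss : IsSemisimpleModule R (P ⧸ J • (⊤ : Submodule R P)) :=
    (Module.isTorsionBySet_quotient_ideal_smul P J).isSemisimpleModule_iff.mp inferInstance
  obtain ⟨rb, hrb⟩ := IsSemisimpleModule.extension_property ib hib LinearMap.id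
  obtain ⟨g, hg⟩ := Module.projective_lifting_property (J • (⊤ : Submodule R N)).mkQ
    (rb ∘ₗ (J • (⊤ : Submodule R P)).mkQ) (Submodule.mkQ_surjective _)
  -- `g ∘ i` is the identity modulo `J`, hence invertible
  let u : Module.End R N := 1 - g ∘ₗ i
  have hu : ∀ x, u x ∈ J • (⊤ : Submodule R N) := by
    intro x
    have h1 := LinearMap.congr_fun hg (i x)
    have h2 := LinearMap.congr_fun hrb ((J • (⊤ : Submodule R N)).mkQ x)
    rw [← Submodule.ker_mkQ (J • (⊤ : Submodule R N)), LinearMap.mem_ker]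
    have h3 : ib ((J • (⊤ : Submodule R N)).mkQ x) = (J • (⊤ : Submodule R P)).mkQ (i x) := rfl
    simp only [LinearMap.comp_apply, LinearMap.id_apply] at h1 h2
    rw [h3] at h2
    simp only [u, LinearMap.sub_apply, map_sub, LinearMap.comp_apply, Module.End.one_apply]
    rw [h1, h2, sub_self]
  have hun : IsNilpotent u := by
    obtain ⟨m, hm⟩ := IsSemiprimaryRing.isNilpotent (R := R)
    refine ⟨m, ?_⟩
    have key : ∀ t : ℕ, LinearMap.range (u ^ t) ≤ J ^ t • (⊤ : Submodule R N) := by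
      intro t
      induction t with
      | zero => rw [Submodule.pow_zero, Ideal.one_eq_top, Submodule.top_smul]; exact le_top
      | succ t ih =>
        rintro _ ⟨x, rfl⟩
        have h1 : (u ^ (t + 1)) x ∈ Submodule.map u (J ^ t • ⊤) := by
          rw [pow_succ']
          exact Submodule.mem_map_of_mem (ih ⟨x, rfl⟩)
        rw [Submodule.map_smul'', Submodule.map_top] at h1
        rw [Submodule.pow_succ, Submodule.mul_smul]
        refine Submodule.smul_mono le_rfl ?_ h1
        rintro _ ⟨y, rfl⟩
        exact hu y
    have := key m
    rw [hm, Ideal.zero_eq_bot, Submodule.bot_smul, le_bot_iff, LinearMap.range_eq_bot] at this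
    exact this
  have hunit : IsUnit (g ∘ₗ i : Module.End R N) := by
    have := hun.isUnit_one_sub
    simpa [u] using this
  obtain ⟨w, hw⟩ := hunit
  have hl : ∃ l : P →ₗ[R] N, l ∘ₗ i = LinearMap.id := by
    refine ⟨(↑w⁻¹ : Module.End R N) ∘ₗ g, ?_⟩
    rw [LinearMap.comp_assoc, ← hw]
    exact w.inv_mul
  obtain ⟨-, l, hl⟩ := ((hex.split_tfae' ).out 1 0 rfl rfl).mp ⟨hf, hl⟩
  exact Module.Projective.of_split l f hl

/-- The kernel of an epimorphism of projectives is projective. -/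
lemma projective_of_exact_left {N P M : Type} [AddCommGroup N] [Module R N] [AddCommGroup P]
    [Module R P] [AddCommGroup M] [Module R M] [Module.Projective R M] [Module.Projective R P]
    (i : N →ₗ[R] P) (f : P →ₗ[R] M) (hi : Function.Injective i) (hex : Function.Exact i f)
    (hf : Function.Surjective f) : Module.Projective R N := by
  obtain ⟨s, hs⟩ := Module.projective_lifting_property f LinearMap.id hf
  obtain ⟨-, l, hl⟩ := ((hex.split_tfae' ).out 0 1 rfl rfl).mp ⟨hi, s, hs⟩
  exact Module.Projective.of_split i l hl

/-- An extension of projectives is projective. -/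
lemma projective_of_exact_middle {N P M : Type} [AddCommGroup N] [Module R N] [AddCommGroup P]
    [Module R P] [AddCommGroup M] [Module R M] [Module.Projective R M] [Module.Projective R N]
    (i : N →ₗ[R] P) (f : P →ₗ[R] M) (hi : Function.Injective i) (hex : Function.Exact i f)
    (hf : Function.Surjective f) : Module.Projective R P := by
  obtain ⟨s, hs⟩ := Module.projective_lifting_property f LinearMap.id hf
  obtain ⟨e, -, -⟩ := ((hex.split_tfae' ).out 0 2 rfl rfl).mp ⟨hi, s, hs⟩
  exact Module.Projective.of_equiv' e.symm

end LocalArtinian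

/-! ### The corner functor -/

section CornerFunctor

variable {A : Type} [Ring A]

/-- The corner functor `M ↦ eM` on morphisms. -/
def cornerMap {e : A} (he : e * e = e) {M N : Type} [AddCommGroup M] [Module A M]
    [AddCommGroup N] [Module A N] (f : M →ₗ[A] N) :
    CornerMod e he M →ₗ[Corner e he] CornerMod e he N where
  toFun m := ⟨f m.1, by rw [← map_smul, m.2]⟩
  map_add' x y := Subtype.ext (map_add f x.1 y.1)
  map_smul' c x := Subtype.ext (map_smul f c.1 x.1)

variable {e : A} (he : e * e = e) {L M N : Type} [AddCommGroup L] [Module A L]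
    [AddCommGroup M] [Module A M] [AddCommGroup N] [Module A N]

lemma cornerMap_injective {f : M →ₗ[A] N} (hf : Function.Injective f) :
    Function.Injective (cornerMap he f) := fun _ _ h =>
  Subtype.ext (hf (congrArg Subtype.val h))

lemma cornerMap_surjective {f : M →ₗ[A] N} (hf : Function.Surjective f) :
    Function.Surjective (cornerMap he f) := by
  rintro ⟨y, hy⟩
  obtain ⟨x, rfl⟩ := hf y
  exact ⟨⟨e • x, by rw [smul_smul, he]⟩, Subtype.ext ((map_smul f e x).trans hy)⟩

lemma cornerMap_exact {f : L →ₗ[A] M} {g : M →ₗ[A] N} (hf : Function.Injective f)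
    (h : Function.Exact f g) : Function.Exact (cornerMap he f) (cornerMap he g) := by
  rintro ⟨y, hy⟩
  constructor
  · intro h0
    obtain ⟨x, rfl⟩ := (h y).mp (congrArg Subtype.val h0)
    exact ⟨⟨x, hf (by rw [map_smul, hy])⟩, rfl⟩
  · rintro ⟨x, hx⟩
    refine Subtype.ext ?_
    have : y = f x.1 := (congrArg Subtype.val hx).symm
    exact (h y).mpr ⟨x.1, this.symm⟩

/-- If `eA` is projective over `eAe`, then the corner functor preserves projectives. -/
lemma projective_cornerMod (hA : Module.Projective (Corner e he) (CornerMod e he A))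
    (P : Type) [AddCommGroup P] [Module A P] [hP : Module.Projective A P] :
    Module.Projective (Corner e he) (CornerMod e he P) := by
  obtain ⟨s, hs⟩ := hP.out
  -- `e (P →₀ A)` is identified with `P →₀ eA`
  let q : A →+ CornerMod e he A :=
    { toFun := fun a => ⟨e * a, by rw [smul_eq_mul, ← mul_assoc, he]⟩
      map_zero' := Subtype.ext (mul_zero e)
      map_add' := fun a b => Subtype.ext (mul_add e a b) }
  let φ : CornerMod e he (P →₀ A) →ₗ[Corner e he] (P →₀ CornerMod e he A) :=
    { toFun := fun c => Finsupp.mapRange q q.map_zero c.1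
      map_add' := fun c d => Finsupp.mapRange_add (map_add q) c.1 d.1
      map_smul' := fun r c => by
        ext p
        have h1 : e * c.1 p = c.1 p := DFunLike.congr_fun c.2 p
        refine Subtype.ext ?_
        change e * (r.1 * c.1 p) = r.1 * (e * c.1 p)
        rw [h1, ← mul_assoc, r.2.1] }
  let ψ : (P →₀ CornerMod e he A) →ₗ[Corner e he] CornerMod e he (P →₀ A) :=
    Finsupp.lsum ℕ fun p => cornerMap he (Finsupp.lsingle p)
  have hval : ∀ c : P →₀ CornerMod e he A, (ψ c).1 = c.mapRange (fun a : CornerMod e he A => a.1) rfl := by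
    intro c
    induction c using Finsupp.induction_linear with
    | zero => rw [map_zero, Finsupp.mapRange_zero]; rfl
    | add f g hf hg =>
      rw [map_add, Finsupp.mapRange_add (f := fun a : CornerMod e he A => a.1) (fun _ _ => rfl),
        ← hf, ← hg]
      rfl
    | single p a =>
      have : ψ (Finsupp.single p a) = cornerMap he (Finsupp.lsingle p) a := by
        simp [ψ]
      rw [this, Finsupp.mapRange_single]
      rfl
  have h1 : ψ ∘ₗ φ = LinearMap.id := by
    ext c
    refine Subtype.ext ?_
    rw [LinearMap.comp_apply, hval]
    ext p
    exact DFunLike.congr_fun c.2 p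
  have hfin : Module.Projective (Corner e he) (P →₀ CornerMod e he A) := by
    classical
    exact Module.Projective.of_equiv' (finsuppLequivDFinsupp (Corner e he)).symm
  have hproj : Module.Projective (Corner e he) (CornerMod e he (P →₀ A)) :=
    Module.Projective.of_split φ ψ h1
  refine Module.Projective.of_split (cornerMap he s)
    (cornerMap he (Finsupp.linearCombination A id)) ?_
  ext x
  exact Subtype.ext (hs x.1)

end CornerFunctor

/-! ### The rings `e_i A e_i` are local -/

section Local

variable {A : Type} [Ring A]

lemma corner_isArtinianRing (k : Type) [Field k] [Algebra k A]
    [FiniteDimensional k A] (e : A) (he : e * e = e) : IsArtinianRing (Corner e he) := by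
  let v : Corner e he →ₗ[k] A :=
    { toFun := Subtype.val, map_add' := fun _ _ => rfl, map_smul' := fun _ _ => rfl }
  have : Module.Finite k (Corner e he) := Module.Finite.of_injective v Subtype.val_injective
  exact IsArtinianRing.of_finite k _

variable {n : ℕ} (e : Fin n → A) (hidem : ∀ i, e i * e i = e i)

lemma mem_stdIdeal_iff {e : Fin n → A}
    (hidem : ∀ i, e i * e i = e i) {i : Fin n} {x : A} :
    x ∈ stdIdeal A e i ↔ x * e i = x := by
  rw [Submodule.mem_span_singleton]
  constructor
  · rintro ⟨a, rfl⟩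
    rw [smul_eq_mul, mul_assoc, hidem]
  · intro h
    exact ⟨x, h⟩

/-- Fitting's lemma for right multiplication by `x ∈ e_i A e_i` on the indecomposable module
`A e_i`. -/
lemma corner_nilpotent_or_isUnit (k : Type) [Field k] [Algebra k A]
    [FiniteDimensional k A] {i : Fin n} (hprim : IsIndecModule A ↥(stdIdeal A e i))
    (x : Corner (e i) (hidem i)) : IsNilpotent x ∨ IsUnit x := by
  have hart : IsArtinianRing A := IsArtinianRing.of_finite k A
  have := corner_isArtinianRing k (e i) (hidem i)
  let ρ : Module.End A ↥(stdIdeal A e i) :=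
    { toFun := fun y => ⟨y.1 * x.1, (mem_stdIdeal_iff hidem).mpr (by rw [mul_assoc, x.2.2])⟩
      map_add' := fun y z => Subtype.ext (add_mul _ _ _)
      map_smul' := fun a y => Subtype.ext (mul_assoc _ _ _) }
  let e' : ↥(stdIdeal A e i) := ⟨e i, (mem_stdIdeal_iff hidem).mpr (hidem i)⟩
  have hpow : ∀ m : ℕ, ((ρ ^ m) e').1 = (x ^ m).1 := by
    intro m
    induction m with
    | zero => rfl
    | succ m ih =>
      rw [pow_succ', pow_succ]
      change ((ρ ^ m) e').1 * x.1 = (x ^ m).1 * x.1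
      rw [ih]
  obtain ⟨m, hm⟩ := (ρ.eventually_isCompl_ker_pow_range_pow.and
    (Filter.eventually_ge_atTop 1)).exists
  rcases hprim.2 _ _ hm.1 with h | h
  · right
    have hinj : Function.Injective ρ := by
      have h2 : Function.Injective (ρ ^ m) := LinearMap.ker_eq_bot.mp h
      obtain ⟨t, rfl⟩ := Nat.exists_eq_add_of_le hm.2
      rw [add_comm, pow_succ] at h2
      exact Function.Injective.of_comp (f := ⇑(ρ ^ t)) h2
    obtain ⟨y, hy⟩ := IsArtinian.surjective_of_injective_endomorphism ρ hinj e'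
    have hy' : y.1 * x.1 = e i := congrArg Subtype.val hy
    have hye := (mem_stdIdeal_iff hidem).mp y.2
    let z : Corner (e i) (hidem i) := ⟨e i * y.1, by rw [← mul_assoc, hidem],
      by rw [mul_assoc, hye]⟩
    have hz : z * x = 1 := Subtype.ext (by
      change e i * y.1 * x.1 = e i
      rw [mul_assoc, hy', hidem])
    exact IsUnit.of_mul_eq_one_right _ hz
  · left
    refine ⟨m, Subtype.ext ?_⟩
    rw [← hpow, LinearMap.range_eq_bot.mp h]
    rfl

/-- Every element of `e_i A e_i` is a unit or lies in the radical. -/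
lemma corner_local (k : Type) [Field k] [Algebra k A]
    [FiniteDimensional k A] {i : Fin n} (hprim : IsIndecModule A ↥(stdIdeal A e i))
    (x : Corner (e i) (hidem i)) :
    IsUnit x ∨ x ∈ Ring.jacobson (Corner (e i) (hidem i)) := by
  have := corner_isArtinianRing k (e i) (hidem i)
  by_cases hx : IsUnit x
  · exact Or.inl hx
  right
  rw [← Ideal.jacobson_bot, Ideal.mem_jacobson_iff]
  intro y
  have hn : IsNilpotent (y * x) := by
    refine (corner_nilpotent_or_isUnit e hidem k hprim _).resolve_right fun hu => hx ?_
    obtain ⟨w, hw⟩ := hu.exists_left_inv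
    exact IsUnit.of_mul_eq_one_right _ ((mul_assoc w y x).trans hw)
  obtain ⟨z, hz⟩ := (hn.isUnit_one_add).exists_left_inv
  refine ⟨z, ?_⟩
  rw [mul_add, mul_one] at hz
  rw [Ideal.mem_bot, sub_eq_zero, mul_assoc, add_comm]
  exact hz

lemma corner_nontrivial {i : Fin n} (hprim : IsIndecModule A ↥(stdIdeal A e i)) :
    Nontrivial (Corner (e i) (hidem i)) := by
  refine ⟨⟨1, 0, fun h => ?_⟩⟩
  have h0 : e i = 0 := congrArg Subtype.val h
  obtain ⟨x, y, hxy⟩ := hprim.1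
  have hz : ∀ z : ↥(stdIdeal A e i), z = 0 := fun z => Subtype.ext (by
    have := (mem_stdIdeal_iff hidem).mp z.2
    rw [h0, mul_zero] at this
    exact this.symm)
  exact hxy ((hz x).trans (hz y).symm)

end Local

/-! ### Directed standardly stratified algebras -/

section Stratified

variable {A : Type} [Ring A] {n : ℕ} (e : Fin n → A) (hidem : ∀ i, e i * e i = e i)

/-- For `A` directed, `e_i Δ_j` is `e_i A e_i` if `i = j`, and zero otherwise. -/
lemma projective_cornerMod_stdMod (hdir : IsDirectedAlgebra A e) (i j : Fin n) :
    Module.Projective (Corner (e i) (hidem i)) (CornerMod (e i) (hidem i) (StdMod A e j)) := by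
  have hmk : Function.Surjective (Submodule.mkQ
    (Submodule.comap (stdIdeal A e j).subtype (stdTrace A e j))) := Submodule.mkQ_surjective _
  have hmem : ∀ x : ↥(stdIdeal A e j), x.1 * e j = x.1 := fun x =>
    (mem_stdIdeal_iff hidem).mp x.2
  rcases eq_or_ne i j with rfl | hij
  · -- `e_i` kills the trace, because `e_i A e_l = 0` for `l > i`
    have htr : ∀ x ∈ stdTrace A e i, ∀ a, e i * a * x = 0 := by
      intro x hx
      induction hx using Submodule.span_induction with
      | mem x h =>
        obtain ⟨l, hl, b, rfl⟩ := h
        intro a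
        rw [← mul_assoc, ← mul_assoc, hdir l i hl a, zero_mul, zero_mul]
      | zero => exact fun a => mul_zero _
      | add x y _ _ h1 h2 => exact fun a => by rw [mul_add, h1, h2, add_zero]
      | smul c x _ h =>
        intro a
        rw [smul_eq_mul, ← mul_assoc, mul_assoc (e i) a c, h]
    let φ : Corner (e i) (hidem i) →ₗ[Corner (e i) (hidem i)]
        CornerMod (e i) (hidem i) (StdMod A e i) :=
      (cornerMap (hidem i) (Submodule.mkQ _)) ∘ₗ
      { toFun := fun x => ⟨⟨x.1, (mem_stdIdeal_iff hidem).mpr x.2.2⟩, Subtype.ext x.2.1⟩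
        map_add' := fun x y => rfl
        map_smul' := fun c x => rfl }
    have hinj : Function.Injective φ := by
      rw [injective_iff_map_eq_zero]
      intro x hx
      have h1 := congrArg Subtype.val hx
      have h2 : (⟨x.1, (mem_stdIdeal_iff hidem).mpr x.2.2⟩ : ↥(stdIdeal A e i)) ∈
          Submodule.comap (stdIdeal A e i).subtype (stdTrace A e i) :=
        (Submodule.Quotient.mk_eq_zero _).mp h1
      have h3 := htr _ (Submodule.mem_comap.mp h2) 1
      rw [mul_one] at h3
      exact Subtype.ext (x.2.1.symm.trans h3)
    have hsurj : Function.Surjective φ := by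
      refine (cornerMap_surjective (hidem i) hmk).comp ?_
      rintro ⟨x, hx⟩
      exact ⟨⟨x.1, congrArg Subtype.val hx, hmem x⟩, rfl⟩
    exact Module.Projective.of_equiv' (LinearEquiv.ofBijective φ ⟨hinj, hsurj⟩)
  · have : Subsingleton (CornerMod (e i) (hidem i) (StdMod A e j)) := by
      have h0 : ∀ z : CornerMod (e i) (hidem i) (StdMod A e j), z = 0 := by
        intro z
        obtain ⟨⟨x, hx⟩, rfl⟩ := cornerMap_surjective (hidem i) hmk z
        have hx1 : e i * x.1 = x.1 := congrArg Subtype.val hx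
        have hx2 : e i * x.1 * e j = x.1 := by rw [hx1, hmem]
        refine Subtype.ext ((Submodule.Quotient.mk_eq_zero _).mpr ?_)
        change x.1 ∈ stdTrace A e j
        rcases lt_or_gt_of_ne hij with h | h
        · rw [← hx2, hdir j i h]
          exact Submodule.zero_mem _
        · exact Submodule.subset_span ⟨i, h, x.1, hx2.symm⟩
      exact ⟨fun a b => (h0 a).trans (h0 b).symm⟩
    infer_instance

/-- If `A` is directed and standardly stratified, then `e_i A` is projective over `e_i A e_i`:
it is an iterated extension of the modules `e_i Δ_j`. -/
lemma projective_cornerMod_self (hdir : IsDirectedAlgebra A e) (hss : HasStdFiltration A e A)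
    (i : Fin n) :
    Module.Projective (Corner (e i) (hidem i)) (CornerMod (e i) (hidem i) A) := by
  obtain ⟨r, F, hmono, h0, hlast, hquot⟩ := hss
  have key : ∀ t : Fin (r + 1),
      Module.Projective (Corner (e i) (hidem i)) (CornerMod (e i) (hidem i) (F t)) := by
    intro t
    induction t using Fin.induction with
    | zero =>
      have : Subsingleton (CornerMod (e i) (hidem i) (F 0)) := by
        refine ⟨fun a b => Subtype.ext (Subtype.ext ?_)⟩
        have ha : a.1.1 = 0 := (Submodule.mem_bot A).mp (h0.le a.1.2)
        have hb : b.1.1 = 0 := (Submodule.mem_bot A).mp (h0.le b.1.2)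
        rw [ha, hb]
      infer_instance
    | succ t ih =>
      obtain ⟨j, ⟨φ⟩⟩ := hquot t
      have hle : F t.castSucc ≤ F t.succ := hmono (Fin.castSucc_lt_succ).le
      have := projective_cornerMod_stdMod e hidem hdir i j
      let q : F t.succ →ₗ[A] StdMod A e j := φ.toLinearMap ∘ₗ Submodule.mkQ _
      have hex : Function.Exact (Submodule.inclusion hle) q := by
        intro y
        constructor
        · intro h
          have h1 : Submodule.Quotient.mk y = 0 := φ.map_eq_zero_iff.mp h
          have h2 : y ∈ Submodule.comap (F t.succ).subtype (F t.castSucc) :=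
            (Submodule.Quotient.mk_eq_zero _).mp h1
          exact ⟨⟨y.1, h2⟩, rfl⟩
        · rintro ⟨x, rfl⟩
          exact φ.map_eq_zero_iff.mpr ((Submodule.Quotient.mk_eq_zero _).mpr x.2)
      exact projective_of_exact_middle (cornerMap (hidem i) (Submodule.inclusion hle))
        (cornerMap (hidem i) q)
        (cornerMap_injective _ (Submodule.inclusion_injective hle))
        (cornerMap_exact _ (Submodule.inclusion_injective hle) hex)
        (cornerMap_surjective _ (φ.surjective.comp (Submodule.mkQ_surjective _)))
  have := key (Fin.last r)
  have hs : Function.Surjective (F (Fin.last r)).subtype := by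
    rw [← LinearMap.range_eq_top, Submodule.range_subtype, hlast]
  exact Module.Projective.of_equiv' (LinearEquiv.ofBijective
    (cornerMap (hidem i) (F (Fin.last r)).subtype)
    ⟨cornerMap_injective _ (Submodule.subtype_injective _), cornerMap_surjective _ hs⟩)

lemma projective_LIdeal {f : A} (hf : f * f = f) : Module.Projective A (LIdeal f) :=
  Module.Projective.of_split (M := A)
    { toFun := Subtype.val, map_add' := fun _ _ => rfl, map_smul' := fun _ _ => rfl }
    { toFun := fun a => ⟨a * f, by rw [mul_assoc, hf]⟩
      map_add' := fun x y => Subtype.ext (add_mul _ _ _)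
      map_smul' := fun a x => Subtype.ext (mul_assoc _ _ _) }
    (LinearMap.ext fun x => Subtype.ext x.2)

/-- If every `e_j M` is free, with bases `B_j`, then `P = ⨁_j ⨁_{b ∈ B_j} A e_j` maps onto `M`.
If moreover `e_j M = 0` for all `j < i`, then `e_i P → e_i M` is injective, since
`e_i A e_j = 0` for `j > i` and `B_j = ∅` for `j < i`. -/
lemma exists_projective_cover (hsum : ∑ i, e i = 1) (hdir : IsDirectedAlgebra A e)
    (hnt : ∀ i, Nontrivial (Corner (e i) (hidem i)))
    (M : Type) [AddCommGroup M] [Module A M]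
    (hfree : ∀ i, Module.Free (Corner (e i) (hidem i)) (CornerMod (e i) (hidem i) M)) :
    ∃ (P : Type) (_ : AddCommGroup P) (_ : Module A P) (f : P →ₗ[A] M),
      Module.Projective A P ∧ Function.Surjective f ∧
      ∀ i : Fin n, (∀ j < i, Subsingleton (CornerMod (e j) (hidem j) M)) →
        ∀ p : P, e i • p = p → f p = 0 → p = 0 := by
  classical
  let b := fun i => Module.Free.chooseBasis (Corner (e i) (hidem i)) (CornerMod (e i) (hidem i) M)
  let X := Σ i, Module.Free.ChooseBasisIndex (Corner (e i) (hidem i)) (CornerMod (e i) (hidem i) M)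
  let v : X → M := fun x => (b x.1 x.2).1
  have hv : ∀ x : X, e x.1 • v x = v x := fun x => (b x.1 x.2).2
  let g : (x : X) → LIdeal (e x.1) →ₗ[A] M := fun x =>
    { toFun := fun a => a.1 • v x
      map_add' := fun a c => add_smul _ _ _
      map_smul' := fun a c => mul_smul _ _ _ }
  let f : (Π₀ x : X, LIdeal (e x.1)) →ₗ[A] M := DFinsupp.lsum ℕ g
  have := fun x : X => projective_LIdeal (hidem x.1)
  refine ⟨Π₀ x : X, LIdeal (e x.1), inferInstance, inferInstance, f, inferInstance, ?_, ?_⟩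
  · rw [← LinearMap.range_eq_top, eq_top_iff]
    have hvr : ∀ x : X, v x ∈ LinearMap.range f := by
      intro x
      refine ⟨DFinsupp.single x ⟨e x.1, hidem _⟩, ?_⟩
      have : f (DFinsupp.single x ⟨e x.1, hidem _⟩) = g x ⟨e x.1, hidem _⟩ := by
        simp only [f, DFinsupp.lsum_apply_apply]
        exact DFinsupp.sumAddHom_single _ _ _
      rw [this]
      exact hv x
    have hcor : ∀ i (m : CornerMod (e i) (hidem i) M), m.1 ∈ LinearMap.range f := by
      intro i m
      have hm : m ∈ Submodule.span (Corner (e i) (hidem i)) (Set.range (b i)) := by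
        rw [(b i).span_eq]; trivial
      induction hm using Submodule.span_induction with
      | mem x h =>
        obtain ⟨t, rfl⟩ := h
        exact hvr ⟨i, t⟩
      | zero => exact Submodule.zero_mem _
      | add x y _ _ h1 h2 => exact Submodule.add_mem _ h1 h2
      | smul a x _ h => exact Submodule.smul_mem _ a.1 h
    intro m _
    have hm : m = ∑ i, e i • m := by rw [← Finset.sum_smul, hsum, one_smul]
    rw [hm]
    exact Submodule.sum_mem _ fun i _ => hcor i ⟨e i • m, by rw [smul_smul, hidem]⟩
  · intro i hi p hp hfp
    have hcoord : ∀ x, e i * (p x).1 = (p x).1 := fun x =>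
      congrArg Subtype.val (DFunLike.congr_fun hp x)
    have hcoord2 : ∀ x, e i * (p x).1 * e x.1 = (p x).1 := fun x => by
      rw [hcoord]; exact (p x).2
    have hz : ∀ x : X, x.1 ≠ i → p x = 0 := by
      intro x hx
      rcases lt_or_gt_of_ne hx with h | h
      · have := hi _ h
        exact absurd (Subsingleton.elim _ _) ((b x.1).ne_zero x.2)
      · refine Subtype.ext ?_
        rw [← hcoord2 x, hdir x.1 i h]
        rfl
    let c : Module.Free.ChooseBasisIndex (Corner (e i) (hidem i)) (CornerMod (e i) (hidem i) M) →
        Corner (e i) (hidem i) := fun t => ⟨(p ⟨i, t⟩).1, hcoord _, (p ⟨i, t⟩).2⟩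
    have hinjS : Function.Injective (Sigma.mk i : _ → X) := sigma_mk_injective
    let s := p.support.preimage (Sigma.mk i) hinjS.injOn
    have hfsum : f p = ∑ x ∈ p.support, (p x).1 • v x := by
      simp only [f, DFinsupp.lsum_apply_apply, DFinsupp.sumAddHom_apply]
      rfl
    have hsum' : ∑ t ∈ s, c t • b i t = 0 := by
      let val : CornerMod (e i) (hidem i) M →+ M :=
        { toFun := Subtype.val, map_zero' := rfl, map_add' := fun _ _ => rfl }
      have hval : Function.Injective val := Subtype.val_injective
      apply hval
      rw [map_sum, map_zero, ← hfp, hfsum]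
      refine (Finset.sum_preimage (Sigma.mk i) p.support hinjS.injOn
        (fun x : X => (p x).1 • v x) ?_)
      intro x hx hxr
      have : p x = 0 := hz x fun h => hxr (by
        obtain ⟨j, t⟩ := x
        subst h
        exact ⟨t, rfl⟩)
      rw [this]
      exact zero_smul A _
    have hc := linearIndependent_iff'.mp (b i).linearIndependent s c hsum'
    ext x
    by_cases hx : x.1 = i
    · obtain ⟨j, t⟩ := x
      subst hx
      by_contra hne
      have h1 : c t = 0 := hc t (by
        rw [Finset.mem_preimage, DFinsupp.mem_support_iff]
        exact hne)
      have h2 : (c t).1 = 0 := congrArg Subtype.val h1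
      exact hne (Subtype.ext h2)
    · rw [hz x hx]; rfl

/-- If every `e_j M` is free and `e_j M = 0` for the first `n - d` indices `j`, then
`M` has projective dimension at most `d`. -/
lemma projDimLE_of_free (hsum : ∑ i, e i = 1) (hdir : IsDirectedAlgebra A e)
    (hnt : ∀ i, Nontrivial (Corner (e i) (hidem i)))
    (hart : ∀ i, IsSemiprimaryRing (Corner (e i) (hidem i)))
    (hloc : ∀ i, ∀ x : Corner (e i) (hidem i), IsUnit x ∨ x ∈ Ring.jacobson _)
    (hA : ∀ i, Module.Projective (Corner (e i) (hidem i)) (CornerMod (e i) (hidem i) A))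
    (d : ℕ) : ∀ (M : Type) [AddCommGroup M] [Module A M],
      (∀ i, Module.Free (Corner (e i) (hidem i)) (CornerMod (e i) (hidem i) M)) →
      (∀ j : Fin n, j.1 + d < n → Subsingleton (CornerMod (e j) (hidem j) M)) →
      ProjDimLE A d M := by
  induction d with
  | zero =>
    intro M _ _ _ hM
    have hz : ∀ m : M, m = 0 := by
      intro m
      have hm : m = ∑ i, e i • m := by rw [← Finset.sum_smul, hsum, one_smul]
      rw [hm]
      refine Finset.sum_eq_zero fun i _ => ?_
      have := hM i i.2
      have h0 : ∀ z : CornerMod (e i) (hidem i) M, z = 0 := fun z => Subsingleton.elim z 0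
      exact congrArg Subtype.val (h0 ⟨e i • m, by rw [smul_smul, hidem]⟩)
    have : Subsingleton M := ⟨fun a b => (hz a).trans (hz b).symm⟩
    exact (inferInstance : Module.Projective A M)
  | succ d ih =>
    intro M _ _ hfree hM
    obtain ⟨P, iP, mP, f, hP, hf, hker⟩ :=
      exists_projective_cover e hidem hsum hdir hnt M hfree
    refine ⟨P, iP, mP, f, hP, hf, ih _ (fun i => ?_) fun i hi => ?_⟩
    · have := projective_cornerMod (hidem i) (hA i) P
      have := hfree i
      have := projective_of_exact_left (cornerMap (hidem i) (LinearMap.ker f).subtype)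
        (cornerMap (hidem i) f) (cornerMap_injective _ (Submodule.subtype_injective _))
        (cornerMap_exact _ (Submodule.subtype_injective _) (LinearMap.exact_subtype_ker_map f))
        (cornerMap_surjective _ hf)
      exact free_of_projective_of_local (hloc i) _
    · have h0 : ∀ z : CornerMod (e i) (hidem i) ↥(LinearMap.ker f), z = 0 := fun z =>
        Subtype.ext (Subtype.ext (hker i
          (fun j hj => hM j (by have : j.1 < i.1 := hj; omega)) z.1.1
          (congrArg Subtype.val z.2) z.1.2))
      exact ⟨fun a b => (h0 a).trans (h0 b).symm⟩

/-- The corner functor sends modules of finite projective dimension to projective modules. -/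
lemma projective_cornerMod_of_projDimLE (i : Fin n)
    (hnt : Nontrivial (Corner (e i) (hidem i)))
    (hart : IsSemiprimaryRing (Corner (e i) (hidem i)))
    (hloc : ∀ x : Corner (e i) (hidem i), IsUnit x ∨ x ∈ Ring.jacobson _)
    (hA : Module.Projective (Corner (e i) (hidem i)) (CornerMod (e i) (hidem i) A))
    (d : ℕ) : ∀ (M : Type) [AddCommGroup M] [Module A M], ProjDimLE A d M →
      Module.Projective (Corner (e i) (hidem i)) (CornerMod (e i) (hidem i) M) := by
  induction d with
  | zero =>
    intro M _ _ h
    have : Module.Projective A M := h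
    exact projective_cornerMod (hidem i) hA M
  | succ d ih =>
    intro M _ _ h
    obtain ⟨P, _, _, f, hP, hf, hK⟩ := h
    have := ih _ hK
    have := projective_cornerMod (hidem i) hA P
    exact projective_of_exact_of_local hloc (cornerMap (hidem i) (LinearMap.ker f).subtype)
      (cornerMap (hidem i) f) (cornerMap_injective _ (Submodule.subtype_injective _))
      (cornerMap_exact _ (Submodule.subtype_injective _) (LinearMap.exact_subtype_ker_map f))
      (cornerMap_surjective _ hf)

end Stratified

/-- If the basic finite-dimensional algebra `A` is directed and standardly
stratified with respect to the index order, then a finitely generated left `A`-module `M` has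
finite projective dimension if and only if each `e_iM` is a free `e_iAe_i`-module. -/
theorem statement7
    (k : Type) [Field k] [IsAlgClosed k]
    (A : Type) [Ring A] [Algebra k A] [FiniteDimensional k A]
    {n : ℕ} (e : Fin n → A)
    (hidem : ∀ i, e i * e i = e i)
    (horth : ∀ i j, i ≠ j → e i * e j = 0)
    (hsum : ∑ i, e i = 1)
    (hprim : ∀ i, IsIndecModule A ↥(stdIdeal A e i))
    (hbasic : ∀ i j, i ≠ j → IsEmpty (↥(stdIdeal A e i) ≃ₗ[A] ↥(stdIdeal A e j)))
    (hdir : IsDirectedAlgebra A e)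
    (hss : HasStdFiltration A e A) :
    ∀ (M : Type) [AddCommGroup M] [Module A M], Module.Finite A M →
      ((∃ d : ℕ, ProjDimLE A d M) ↔
        ∀ i : Fin n, Module.Free (Corner (e i) (hidem i)) (CornerMod (e i) (hidem i) M)) := by
  intro M _ _ _
  have hnt := fun i => corner_nontrivial e hidem (hprim i)
  have hart := fun i => corner_isArtinianRing k (e i) (hidem i)
  have hloc := fun i => corner_local e hidem k (hprim i)
  have hA := projective_cornerMod_self e hidem hdir hss
  constructor
  · rintro ⟨d, hd⟩ i
    have := projective_cornerMod_of_projDimLE e hidem i (hnt i) inferInstance (hloc i) (hA i) d M hd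
    exact free_of_projective_of_local (hloc i) _
  · intro hfree
    exact ⟨n, projDimLE_of_free e hidem hsum hdir hnt (fun i => inferInstance) hloc hA n M hfree
      fun j hj => absurd hj (by omega)⟩
end
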